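/- arXiv:2507.04242 — 3 statements merged into one kernel-verified Lean document; each statement's English description precedes it below -/
import Mathlib

section
/- Let D ⊂ ℝ² be an open and bounded set such that ℝ² \ D̄ is connected, and let k ∈ ℂ be such that k is not a non-positive real number (i.e., it is not the case that Im k = 0 and Re k ≤ 0). Let u : ℝ² → ℂ be twice continuously differentiable on ℝ² \ D̄ and satisfy the Helmholtz equation Δu + k²u = 0 on ℝ² \ D̄. If lim_{r→∞} e^{2|Im k| r} ∫_{|x|=r} |u(x)|² ds(x) = 0, then u = 0 on ℝ² \ D̄. (Generalized Rellich's Lemma I, two dimensions.) -/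
open MeasureTheory

/-- The Laplacian of a complex-valued function on `ℝ²`. -/
noncomputable def laplacian2 (u : EuclideanSpace ℝ (Fin 2) → ℂ)
    (x : EuclideanSpace ℝ (Fin 2)) : ℂ :=
  ∑ i : Fin 2,
    fderiv ℝ (fun y => fderiv ℝ u y (EuclideanSpace.single i (1 : ℝ))) x
      (EuclideanSpace.single i (1 : ℝ))

open Set Filter Topology

lemma mv_inv {f f' : ℝ → ℂ} {r s K : ℝ} (hr : 0 < r) (hrs : r ≤ s)
    (hf : ∀ t, r ≤ t → HasDerivAt f (f' t) t) (hb : ∀ t, r ≤ t → ‖f' t‖ ≤ K / t ^ 2) (hK : 0 ≤ K) :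
    ‖f s - f r‖ ≤ K / r := by
  have hB : ∀ t ∈ Icc r s, HasDerivAt (fun t : ℝ => K / r - K / t) (K / t ^ 2) t := by
    intro t ht
    have h0 : t ≠ 0 := (hr.trans_le ht.1).ne'
    have h1 := ((hasDerivAt_inv h0).const_mul K).const_sub (K / r)
    simp only [div_eq_mul_inv] at h1 ⊢
    refine h1.congr_deriv ?_
    ring
  have key := image_norm_le_of_norm_deriv_right_le_deriv_boundary' (f := fun t => f t - f r) (f' := f')
    (a := r) (b := s) (B := fun t => K / r - K / t) (B' := fun t => K / t ^ 2) ?_ ?_ ?_ ?_ ?_ ?_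
    (right_mem_Icc.2 hrs)
  · refine key.trans ?_
    have : 0 ≤ K / s := div_nonneg hK (hr.le.trans hrs)
    linarith
  · intro t ht
    exact ((hf t ht.1).sub_const _).continuousAt.continuousWithinAt
  · intro t ht
    exact ((hf t ht.1).sub_const _).hasDerivWithinAt
  · simp
  · intro t ht
    exact (hB t ht).continuousAt.continuousWithinAt
  · intro t ht
    exact (hB t ⟨ht.1, ht.2.le⟩).hasDerivWithinAt
  · intro t ht
    exact hb t ht.1

lemma decay_step {k : ℂ} (hk0 : k ≠ 0) (hkim : 0 ≤ k.im) {z G q : ℝ → ℂ} {r0 C M : ℝ} (hr0 : 0 < r0)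
    (hC : 0 ≤ C) (hM : 0 ≤ M)
    (hz : ∀ r, r0 ≤ r → HasDerivAt z (G r) r)
    (hG : ∀ r, r0 ≤ r → HasDerivAt G (-(2 * Complex.I * k) * G r + q r * z r) r)
    (hq : ∀ r, r0 ≤ r → ‖q r‖ ≤ C / r ^ 2)
    (hz0 : Tendsto z atTop (𝓝 0)) (hzM : ∀ r, r0 ≤ r → ‖z r‖ ≤ M) :
    ∀ r, r0 ≤ r → ‖z r‖ ≤ C / (‖k‖ * r0) * M := by
  have hk' : 0 < ‖k‖ := norm_pos_iff.2 hk0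
  have hK : 0 ≤ C * M := mul_nonneg hC hM
  have hqz : ∀ r, r0 ≤ r → ‖q r * z r‖ ≤ (C * M) / r ^ 2 := by
    intro r hr
    rw [norm_mul]
    calc ‖q r‖ * ‖z r‖ ≤ (C / r ^ 2) * M := by
          apply mul_le_mul (hq r hr) (hzM r hr) (norm_nonneg _) (by positivity)
      _ = _ := by ring
  set A : ℝ → ℂ := fun r => G r + 2 * Complex.I * k * z r with hA
  have hA' : ∀ r, r0 ≤ r → HasDerivAt A (q r * z r) r := by
    intro r hr
    have := (hG r hr).add ((hz r hr).const_mul (2 * Complex.I * k))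
    refine this.congr_deriv ?_
    ring
  have hAb : ∀ r, r0 ≤ r → ‖A r‖ ≤ C * M / r := by
    intro r hr
    have hrpos := hr0.trans_le hr
    have hAs : ∀ s, r ≤ s → ‖A s - A r‖ ≤ C * M / r := fun s hs =>
      mv_inv hrpos hs (fun t ht => hA' t (hr.trans ht)) (fun t ht => hqz t (hr.trans ht)) hK
    refine le_of_forall_pos_le_add fun ε hε => ?_
    set δ := ε / (2 * ‖k‖ + 2) with hδ
    have hδp : 0 < δ := by positivity
    have hev : ∀ᶠ s in atTop, ‖z s‖ ≤ δ := by
      have := (tendsto_zero_iff_norm_tendsto_zero.1 hz0).eventually (gt_mem_nhds hδp)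
      exact this.mono fun s hs => le_of_lt hs
    obtain ⟨t0, ht0⟩ := eventually_atTop.1 hev
    set t := max t0 r with ht
    have htr : r ≤ t := le_max_right _ _
    have hsm : ∀ s, t ≤ s → ‖z s‖ ≤ δ := fun s hs => ht0 s ((le_max_left _ _).trans hs)
    have hmv := norm_image_sub_le_of_norm_deriv_le_segment'
      (f := fun s : ℝ => z s - s * A r) (f' := fun s => G s - A r) (a := t) (b := t + 1)
      (C := C * M / r + 2 * ‖k‖ * δ) ?_ ?_ (t + 1) (by simp)
    · have e1 : A r = z (t + 1) - z t - ((z (t + 1) - ((t + 1 : ℝ) : ℂ) * A r) - (z t - t * A r)) := by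
        push_cast; ring
      have h1 := hsm t le_rfl
      have h2 := hsm (t + 1) (by linarith)
      have h3 : ‖A r‖ ≤ ‖z (t + 1)‖ + ‖z t‖ + ‖(z (t + 1) - ((t + 1 : ℝ) : ℂ) * A r) - (z t - t * A r)‖ := by
        conv_lhs => rw [e1]
        refine (norm_sub_le _ _).trans ?_
        gcongr
        exact norm_sub_le _ _
      have h4 : ε = δ * (2 * ‖k‖ + 2) := by rw [hδ]; field_simp
      have h5 : t + 1 - t = 1 := by ring
      rw [h5] at hmv
      linarith
    · intro s hs
      have hs' : r0 ≤ s := hr.trans (htr.trans hs.1)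
      have := (hz s hs').fun_sub ((Complex.ofRealCLM.hasDerivAt (x := s)).mul_const (A r))
      simpa using this.hasDerivWithinAt
    · intro s hs
      have hs' : r ≤ s := (htr.trans hs.1)
      have e : G s - A r = (A s - A r) - 2 * Complex.I * k * z s := by simp only [hA]; ring
      rw [e]
      refine (norm_sub_le _ _).trans ?_
      gcongr
      · exact hAs s hs'
      · rw [norm_mul]
        have : ‖2 * Complex.I * k‖ = 2 * ‖k‖ := by simp
        rw [this]
        gcongr
        exact hsm s hs.1
  have hA0 : Tendsto A atTop (𝓝 0) := by
    refine squeeze_zero_norm' (a := fun r => C * M / r) ?_ (tendsto_const_nhds.div_atTop tendsto_id)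
    exact (eventually_ge_atTop r0).mono hAb
  have hGt : Tendsto G atTop (𝓝 0) := by
    have := hA0.sub (hz0.const_mul (2 * Complex.I * k))
    simp only [mul_zero, sub_zero] at this
    refine this.congr fun r => ?_
    simp only [hA]; ring
  have hexpn : ∀ s : ℝ, ‖Complex.exp (2 * Complex.I * k * s)‖ = Real.exp (-(2 * k.im * s)) := by
    intro s
    rw [Complex.norm_exp]
    congr 1
    simp
  have hGb : ∀ r, r0 ≤ r → ‖G r‖ ≤ C * M / r := by
    intro r hr
    have hrpos := hr0.trans_le hr
    set h : ℝ → ℂ := fun s => Complex.exp (2 * Complex.I * k * s) * G s with hh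
    have hd : ∀ s, r ≤ s → HasDerivAt h (Complex.exp (2 * Complex.I * k * s) * (q s * z s)) s := by
      intro s hs
      have h1 : HasDerivAt (fun s : ℝ => Complex.exp (2 * Complex.I * k * s))
          (Complex.exp (2 * Complex.I * k * s) * (2 * Complex.I * k)) s := by
        have := ((Complex.ofRealCLM.hasDerivAt (x := s)).const_mul (2 * Complex.I * k)).cexp
        simpa using this
      have := h1.mul (hG s (hr.trans hs))
      refine this.congr_deriv ?_
      ring
    have hb : ∀ s, r ≤ s → ‖Complex.exp (2 * Complex.I * k * s) * (q s * z s)‖ ≤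
        (Real.exp (-(2 * k.im * r)) * (C * M)) / s ^ 2 := by
      intro s hs
      rw [norm_mul, hexpn, mul_div_assoc]
      apply mul_le_mul _ (hqz s (hr.trans hs)) (norm_nonneg _) (Real.exp_nonneg _)
      apply Real.exp_le_exp.2
      have := mul_le_mul_of_nonneg_left hs hkim
      linarith
    have hmv : ∀ s, r ≤ s → ‖h s - h r‖ ≤ (Real.exp (-(2 * k.im * r)) * (C * M)) / r := fun s hs =>
      mv_inv hrpos hs hd hb (mul_nonneg (Real.exp_nonneg _) hK)
    have hlim : Tendsto h atTop (𝓝 0) := by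
      refine squeeze_zero_norm' (a := fun s => ‖G s‖) ?_ (tendsto_zero_iff_norm_tendsto_zero.1 hGt)
      filter_upwards [eventually_ge_atTop 0] with s hs
      simp only [hh]
      rw [norm_mul, hexpn]
      refine mul_le_of_le_one_left (norm_nonneg _) (Real.exp_le_one_iff.2 ?_)
      have := mul_nonneg hkim hs
      linarith
    have hl2 : Tendsto (fun s => ‖h s - h r‖) atTop (𝓝 ‖0 - h r‖) := (hlim.sub_const _).norm
    have hfin := le_of_tendsto hl2 ((eventually_ge_atTop r).mono hmv)
    rw [zero_sub, norm_neg, hh] at hfin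
    simp only [norm_mul, hexpn] at hfin
    rw [mul_div_assoc] at hfin
    exact le_of_mul_le_mul_left hfin (Real.exp_pos _)
  intro r hr
  have hrpos := hr0.trans_le hr
  have e : 2 * Complex.I * k * z r = A r - G r := by simp only [hA]; ring
  have h1 : 2 * ‖k‖ * ‖z r‖ ≤ C * M / r + C * M / r := by
    have : ‖2 * Complex.I * k * z r‖ = 2 * ‖k‖ * ‖z r‖ := by simp
    rw [← this, e]
    exact (norm_sub_le _ _).trans (add_le_add (hAb r hr) (hGb r hr))
  have h2 : C * M / r ≤ C * M / r0 := by gcongr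
  have h3 : C / (‖k‖ * r0) * M = (C * M / r0) / ‖k‖ := by field_simp
  rw [h3, le_div_iff₀ hk']
  linarith

lemma decay_zero {k : ℂ} (hk0 : k ≠ 0) (hkim : 0 ≤ k.im) {z G q : ℝ → ℂ} {r0 C : ℝ} (hr0 : 0 < r0)
    (hC : 0 ≤ C)
    (hz : ∀ r, r0 ≤ r → HasDerivAt z (G r) r)
    (hG : ∀ r, r0 ≤ r → HasDerivAt G (-(2 * Complex.I * k) * G r + q r * z r) r)
    (hq : ∀ r, r0 ≤ r → ‖q r‖ ≤ C / r ^ 2)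
    (hz0 : Tendsto z atTop (𝓝 0)) : ∃ r1, r0 ≤ r1 ∧ ∀ r, r1 ≤ r → z r = 0 := by
  have hk' : 0 < ‖k‖ := norm_pos_iff.2 hk0
  have hev : ∀ᶠ s in atTop, ‖z s‖ ≤ 1 := by
    have := (tendsto_zero_iff_norm_tendsto_zero.1 hz0).eventually (gt_mem_nhds zero_lt_one)
    exact this.mono fun s hs => le_of_lt hs
  obtain ⟨t0, ht0⟩ := eventually_atTop.1 hev
  set r1 := max r0 (max t0 (2 * C / ‖k‖)) with hr1
  have h01 : r0 ≤ r1 := le_max_left _ _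
  have ht1 : t0 ≤ r1 := (le_max_left _ _).trans (le_max_right _ _)
  have hc1 : 2 * C / ‖k‖ ≤ r1 := (le_max_right _ _).trans (le_max_right _ _)
  have hr1p : 0 < r1 := hr0.trans_le h01
  have hhalf : C / (‖k‖ * r1) ≤ 1 / 2 := by
    rw [div_le_iff₀ hk'] at hc1
    rw [div_le_iff₀ (by positivity)]
    linarith
  have hn : ∀ n : ℕ, ∀ r, r1 ≤ r → ‖z r‖ ≤ (1 / 2 : ℝ) ^ n := by
    intro n
    induction n with
    | zero => intro r hr; simpa using ht0 r (ht1.trans hr)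
    | succ n ih =>
      intro r hr
      refine (decay_step hk0 hkim hr1p hC (by positivity) (fun r hr => hz r (h01.trans hr))
        (fun r hr => hG r (h01.trans hr)) (fun r hr => hq r (h01.trans hr)) hz0 ih r hr).trans ?_
      rw [pow_succ, mul_comm]
      gcongr
  refine ⟨r1, h01, fun r hr => ?_⟩
  have := ge_of_tendsto (tendsto_pow_atTop_nhds_zero_of_lt_one (by norm_num : (0:ℝ) ≤ 1 / 2) (by norm_num))
    (Eventually.of_forall fun n => hn n r hr)
  exact norm_le_zero_iff.1 this

/-- Bessel ODE solutions with decay vanish eventually. -/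
lemma bessel_decay {k : ℂ} (hk0 : k ≠ 0) (hkim : 0 ≤ k.im) {f f1 f2 : ℝ → ℂ} {r0 : ℝ} (n : ℤ)
    (hr0 : 0 < r0)
    (h1 : ∀ r, r0 ≤ r → HasDerivAt f (f1 r) r)
    (h2 : ∀ r, r0 ≤ r → HasDerivAt f1 (f2 r) r)
    (hode : ∀ r, r0 ≤ r → f2 r = - f1 r / r + (n ^ 2 / r ^ 2 - k ^ 2) * f r)
    (hlim : Tendsto (fun r : ℝ => r * Real.exp (2 * k.im * r) * ‖f r‖ ^ 2) atTop (𝓝 0)) :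
    ∃ r1, r0 ≤ r1 ∧ ∀ r, r1 ≤ r → f r = 0 := by
  set E : ℝ → ℂ := fun r => Complex.exp (-(Complex.I * k) * r) with hE
  have hEd : ∀ r, HasDerivAt E (E r * (-(Complex.I * k))) r := by
    intro r
    have := ((Complex.ofRealCLM.hasDerivAt (x := r)).const_mul (-(Complex.I * k))).cexp
    simpa [hE] using this
  have hEn : ∀ r, ‖E r‖ = Real.exp (k.im * r) := by
    intro r
    simp only [hE]
    rw [Complex.norm_exp]
    congr 1
    simp
  set S : ℝ → ℂ := fun r => ((Real.sqrt r : ℝ) : ℂ) with hS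
  have hS2 : ∀ r, 0 < r → S r ^ 2 = r := by
    intro r hr
    simp only [hS]
    rw [← Complex.ofReal_pow, Real.sq_sqrt hr.le]
  have hS0 : ∀ r, 0 < r → S r ≠ 0 := by
    intro r hr
    simp only [hS]
    exact_mod_cast (Real.sqrt_pos.2 hr).ne'
  have hSd : ∀ r, 0 < r → HasDerivAt S (1 / (2 * S r)) r := by
    intro r hr
    have := (Real.hasDerivAt_sqrt hr.ne').ofReal_comp
    simpa [hS] using this
  set z : ℝ → ℂ := fun r => E r * (S r * f r) with hz
  set G : ℝ → ℂ := fun r => E r * (S r * f1 r + (1 / (2 * S r)) * f r - Complex.I * k * (S r * f r)) with hG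
  have hmain := decay_zero (z := z) (G := G) (q := fun r => (n ^ 2 - 1 / 4 : ℂ) / r ^ 2)
    (C := ‖(n ^ 2 - 1 / 4 : ℂ)‖) hk0 hkim hr0 (norm_nonneg _) ?_ ?_ ?_ ?_
  · obtain ⟨r1, h01, hr1⟩ := hmain
    refine ⟨r1, h01, fun r hr => ?_⟩
    have := hr1 r hr
    have hrp := hr0.trans_le (h01.trans hr)
    simpa [hz, hE, hS0 r hrp] using this
  · intro r hr
    have hrp := hr0.trans_le hr
    have := (hEd r).mul ((hSd r hrp).mul (h1 r hr))
    refine this.congr_deriv ?_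
    simp only [hG, Pi.mul_apply]; ring
  · intro r hr
    have hrp := hr0.trans_le hr
    have hs0 := hS0 r hrp
    have hd2 : HasDerivAt (fun r => 1 / (2 * S r)) (-(1 / (4 * S r ^ 3))) r := by
      have := (((hSd r hrp).const_mul 2).inv (by simpa using hs0))
      simp only [one_div]
      refine this.congr_deriv ?_
      field_simp
      norm_num
    have := (hEd r).mul ((((hSd r hrp).mul (h2 r hr)).add (hd2.mul (h1 r hr))).sub
      (((hSd r hrp).mul (h1 r hr)).const_mul (Complex.I * k)))
    refine this.congr_deriv ?_
    rw [hode r hr]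
    simp only [hG, hz, ← hS2 r hrp, Pi.add_apply, Pi.sub_apply, Pi.mul_apply]
    have hI : Complex.I ^ 2 = -1 := Complex.I_sq
    generalize S r = s at *
    generalize E r = e at *
    field_simp
    ring_nf
    simp only [hI]
    ring
  · intro r hr
    simp
  · rw [tendsto_zero_iff_norm_tendsto_zero]
    have : Tendsto (fun r : ℝ => Real.sqrt (r * Real.exp (2 * k.im * r) * ‖f r‖ ^ 2)) atTop (𝓝 0) := by
      simpa using hlim.sqrt
    refine this.congr' ?_
    filter_upwards [eventually_gt_atTop 0] with r hr
    simp only [hz, norm_mul, hEn]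
    rw [Real.sqrt_mul (by positivity), Real.sqrt_sq (norm_nonneg _), Real.sqrt_mul hr.le,
      show 2 * k.im * r = k.im * r + k.im * r by ring, Real.exp_add, Real.sqrt_mul_self (Real.exp_nonneg _)]
    simp only [hS, Complex.norm_real, Real.norm_eq_abs, abs_of_nonneg (Real.sqrt_nonneg r)]
    ring

/-- uniqueness for the Bessel-type ODE -/
lemma bessel_unique {k : ℂ} {f f1 f2 : ℝ → ℂ} {I : Set ℝ} (n : ℤ)
    (hI : IsOpen I) (hIc : I.OrdConnected) (hIpos : ∀ r ∈ I, 0 < r)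
    (h1 : ∀ r ∈ I, HasDerivAt f (f1 r) r)
    (h2 : ∀ r ∈ I, HasDerivAt f1 (f2 r) r)
    (hode : ∀ r ∈ I, f2 r = - f1 r / r + (n ^ 2 / r ^ 2 - k ^ 2) * f r)
    {r0 : ℝ} (hr0 : r0 ∈ I) (hf0 : f =ᶠ[𝓝 r0] 0) : ∀ r ∈ I, f r = 0 := by
  intro r hr
  have hf00 : f r0 = 0 := hf0.eq_of_nhds
  have hf10 : f1 r0 = 0 := by
    have := (h1 r0 hr0).congr_of_eventuallyEq hf0.symm
    exact this.unique (hasDerivAt_const r0 (0 : ℂ))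
  have hmin : min r r0 ∈ I := by rcases min_choice r r0 with h | h <;> rw [h] <;> assumption
  have hmax : max r r0 ∈ I := by rcases max_choice r r0 with h | h <;> rw [h] <;> assumption
  obtain ⟨a, ha, haI⟩ : ∃ a, a < min r r0 ∧ a ∈ I := by
    have := (hI.mem_nhds hmin)
    obtain ⟨ε, hε, hb⟩ := Metric.mem_nhds_iff.1 this
    refine ⟨min r r0 - ε / 2, by linarith, hb ?_⟩
    rw [Metric.mem_ball, Real.dist_eq, abs_lt]; constructor <;> linarith
  obtain ⟨b, hb, hbI⟩ : ∃ b, max r r0 < b ∧ b ∈ I := by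
    have := (hI.mem_nhds hmax)
    obtain ⟨ε, hε, hb⟩ := Metric.mem_nhds_iff.1 this
    refine ⟨max r r0 + ε / 2, by linarith, hb ?_⟩
    rw [Metric.mem_ball, Real.dist_eq, abs_lt]; constructor <;> linarith
  have hsub : Ioo a b ⊆ I := Ioo_subset_Icc_self.trans (hIc.out haI hbI)
  have hapos := hIpos a haI
  set v : ℝ → ℂ × ℂ → ℂ × ℂ := fun t y => (y.2, -y.2 / t + (n ^ 2 / t ^ 2 - k ^ 2) * y.1) with hv
  set K : ℝ := 1 + 1 / a + (n ^ 2 / a ^ 2 + ‖k‖ ^ 2) with hK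
  have hKpos : 0 ≤ K := by positivity
  have hlip : ∀ t ∈ Ioo a b, LipschitzOnWith K.toNNReal (v t) univ := by
    intro t ht
    refine LipschitzOnWith.of_dist_le_mul fun y _ w _ => ?_
    rw [Real.coe_toNNReal K hKpos]
    have htp : 0 < t := hapos.trans ht.1
    rw [dist_eq_norm, dist_eq_norm]
    have e : v t y - v t w = ((y - w).2, -(y - w).2 / t + (n ^ 2 / t ^ 2 - k ^ 2) * (y - w).1) := by
      simp only [hv]
      ext <;> simp
      ring
    rw [e]
    have n1 : ‖(y - w).1‖ ≤ ‖y - w‖ := norm_fst_le _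
    have n2 : ‖(y - w).2‖ ≤ ‖y - w‖ := norm_snd_le _
    generalize y - w = d at *
    have hc1 : ‖-d.2 / (t : ℂ)‖ ≤ 1 / a * ‖d‖ := by
      rw [norm_div, norm_neg, Complex.norm_real, Real.norm_of_nonneg htp.le, one_div_mul_eq_div]
      have := ht.1.le
      gcongr
    have hc2 : ‖(n ^ 2 / t ^ 2 - k ^ 2) * d.1‖ ≤ (n ^ 2 / a ^ 2 + ‖k‖ ^ 2) * ‖d‖ := by
      rw [norm_mul]
      gcongr
      refine (norm_sub_le _ _).trans ?_
      rw [norm_pow k]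
      gcongr
      rw [norm_div, norm_pow, norm_pow, Complex.norm_real, Real.norm_of_nonneg htp.le]
      have e2 : ‖(n : ℂ)‖ ^ 2 = (n : ℝ) ^ 2 := by
        rw [Complex.norm_intCast, sq_abs]
      rw [e2]
      have := ht.1.le
      gcongr
    have hn0 := norm_nonneg d
    have hKd : K * ‖d‖ = ‖d‖ + 1 / a * ‖d‖ + (n ^ 2 / a ^ 2 + ‖k‖ ^ 2) * ‖d‖ := by rw [hK]; ring
    have p1 : 0 ≤ 1 / a * ‖d‖ := by positivity
    have p2 : 0 ≤ (n ^ 2 / a ^ 2 + ‖k‖ ^ 2) * ‖d‖ := by positivity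
    change _ ≤ K * ‖d‖
    rw [Prod.norm_def]
    apply max_le
    · change ‖d.2‖ ≤ _
      linarith
    · refine (norm_add_le _ _).trans ?_
      linarith
  have hEq := ODE_solution_unique_of_mem_Ioo (v := v) (s := fun _ => univ) (K := K.toNNReal)
    (f := fun t => (f t, f1 t)) (g := fun _ => (0 : ℂ × ℂ)) (a := a) (b := b) (t₀ := r0)
    hlip ⟨ha.trans_le (min_le_right _ _), (le_max_right _ _).trans_lt hb⟩ ?_ ?_ ?_
  · have := hEq (x := r) ⟨ha.trans_le (min_le_left _ _), (le_max_left _ _).trans_lt hb⟩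
    exact congrArg Prod.fst this
  · intro t ht
    refine ⟨?_, mem_univ _⟩
    have htI := hsub ht
    have := (h1 t htI).prodMk (h2 t htI)
    rw [hode t htI] at this
    exact this
  · intro t ht
    refine ⟨?_, mem_univ _⟩
    have e0 : v t 0 = 0 := by simp [hv]
    simp only [e0]
    exact hasDerivAt_const _ _
  · simp [hf00, hf10]

lemma hasDerivAt_param {I : Set ℝ} (hI : IsOpen I) {F F' : ℝ → ℝ → ℂ}
    (hF : ContinuousOn (Function.uncurry F) (I ×ˢ univ))
    (hF' : ContinuousOn (Function.uncurry F') (I ×ˢ univ))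
    (h : ∀ r ∈ I, ∀ θ, HasDerivAt (fun r => F r θ) (F' r θ) r) (a b : ℝ) :
    ∀ r ∈ I, HasDerivAt (fun r => ∫ θ in a..b, F r θ) (∫ θ in a..b, F' r θ) r := by
  intro r hr
  have cF : ∀ r ∈ I, Continuous (F r) := fun r hr => by
    have := hF.comp (f := fun θ : ℝ => (r, θ)) (s := univ) (by fun_prop) (fun θ _ => ⟨hr, mem_univ _⟩)
    exact continuousOn_univ.1 this
  have cF' : ∀ r ∈ I, Continuous (F' r) := fun r hr => by
    have := hF'.comp (f := fun θ : ℝ => (r, θ)) (s := univ) (by fun_prop) (fun θ _ => ⟨hr, mem_univ _⟩)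
    exact continuousOn_univ.1 this
  obtain ⟨ε, hε, hb⟩ := Metric.nhds_basis_closedBall.mem_iff.1 (hI.mem_nhds hr)
  have hcpt : IsCompact (Metric.closedBall r ε ×ˢ uIcc a b) :=
    (isCompact_closedBall r ε).prod isCompact_uIcc
  obtain ⟨C, hC⟩ := hcpt.exists_bound_of_continuousOn
    (hF'.mono (prod_mono hb (subset_univ _)))
  refine (intervalIntegral.hasDerivAt_integral_of_dominated_loc_of_deriv_le (bound := fun _ => C)
    (Metric.closedBall_mem_nhds r hε) ?_ ?_ ?_ ?_ ?_ ?_).2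
  · filter_upwards [hI.mem_nhds hr] with x hx
    exact (cF x hx).aestronglyMeasurable
  · exact (cF r hr).intervalIntegrable _ _
  · exact (cF' r hr).aestronglyMeasurable
  · refine Eventually.of_forall fun t ht x hx => ?_
    exact hC (x, t) ⟨hx, uIoc_subset_uIcc ht⟩
  · exact intervalIntegrable_const
  · refine Eventually.of_forall fun t ht x hx => ?_
    exact h x (hb hx) t

/-- unit vector at angle `θ` -/
noncomputable def eT (θ : ℝ) : EuclideanSpace ℝ (Fin 2) :=
  Real.cos θ • EuclideanSpace.single 0 (1 : ℝ) + Real.sin θ • EuclideanSpace.single 1 (1 : ℝ)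

/-- the orthogonal unit vector -/
noncomputable def eP (θ : ℝ) : EuclideanSpace ℝ (Fin 2) :=
  (-Real.sin θ) • EuclideanSpace.single 0 (1 : ℝ) + Real.cos θ • EuclideanSpace.single 1 (1 : ℝ)

lemma hasDerivAt_eT (θ : ℝ) : HasDerivAt eT (eP θ) θ :=
  ((Real.hasDerivAt_cos θ).smul_const _).add ((Real.hasDerivAt_sin θ).smul_const _)

lemma hasDerivAt_eP (θ : ℝ) : HasDerivAt eP (-eT θ) θ := by
  refine (((Real.hasDerivAt_sin θ).neg.smul_const _).add
    ((Real.hasDerivAt_cos θ).smul_const _)).congr_deriv ?_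
  simp only [eT, neg_smul, neg_add]

lemma continuous_eT : Continuous eT := by unfold eT; fun_prop

lemma continuous_eP : Continuous eP := by unfold eP; fun_prop

lemma norm_eT (θ : ℝ) : ‖eT θ‖ = 1 := by
  rw [EuclideanSpace.norm_eq, Real.sqrt_eq_one]
  simp [eT, Fin.sum_univ_two]

lemma eT_periodic : Function.Periodic eT (2 * Real.pi) := by
  intro θ; simp [eT]

lemma eP_periodic : Function.Periodic eP (2 * Real.pi) := by
  intro θ; simp [eP]

lemma exists_eT (x : EuclideanSpace ℝ (Fin 2)) : ∃ θ, x = ‖x‖ • eT θ := by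
  set z : ℂ := ⟨x 0, x 1⟩ with hz
  have hn : ‖z‖ = ‖x‖ := by
    rw [EuclideanSpace.norm_eq, Complex.norm_def, Complex.normSq_apply]
    simp [Fin.sum_univ_two, hz, sq]
  refine ⟨z.arg, ?_⟩
  have h1 := Complex.norm_mul_cos_arg z
  have h2 := Complex.norm_mul_sin_arg z
  rw [hn] at h1 h2
  have h3 : z.re = x 0 := rfl
  have h4 : z.im = x 1 := rfl
  rw [h3] at h1
  rw [h4] at h2
  clear_value z
  ext i
  fin_cases i
  · simp [eT, h1]
  · simp [eT, h2]

section polar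
variable {Ω : Set (EuclideanSpace ℝ (Fin 2))} {u : EuclideanSpace ℝ (Fin 2) → ℂ}

lemma hasFDerivAt_u (hΩ : IsOpen Ω) (hu : ContDiffOn ℝ 2 u Ω) {x} (hx : x ∈ Ω) :
    HasFDerivAt u (fderiv ℝ u x) x :=
  ((hu.contDiffAt (hΩ.mem_nhds hx)).differentiableAt (by norm_num)).hasFDerivAt

lemma contDiffOn_Du (hΩ : IsOpen Ω) (hu : ContDiffOn ℝ 2 u Ω) :
    ContDiffOn ℝ 1 (fderiv ℝ u) Ω := hu.fderiv_of_isOpen hΩ (by norm_num)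

lemma hasFDerivAt_Du (hΩ : IsOpen Ω) (hu : ContDiffOn ℝ 2 u Ω) {x} (hx : x ∈ Ω) :
    HasFDerivAt (fderiv ℝ u) (fderiv ℝ (fderiv ℝ u) x) x :=
  (((contDiffOn_Du hΩ hu).contDiffAt (hΩ.mem_nhds hx)).differentiableAt (by norm_num)).hasFDerivAt

lemma continuousOn_H (hΩ : IsOpen Ω) (hu : ContDiffOn ℝ 2 u Ω) :
    ContinuousOn (fderiv ℝ (fderiv ℝ u)) Ω :=
  (contDiffOn_Du hΩ hu).continuousOn_fderiv_of_isOpen hΩ (by norm_num)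

lemma laplacian_eq (hΩ : IsOpen Ω) (hu : ContDiffOn ℝ 2 u Ω) {x} (hx : x ∈ Ω) (θ : ℝ) :
    laplacian2 u x = fderiv ℝ (fderiv ℝ u) x (eT θ) (eT θ) + fderiv ℝ (fderiv ℝ u) x (eP θ) (eP θ) := by
  have h : ∀ v w : EuclideanSpace ℝ (Fin 2), fderiv ℝ (fun y => fderiv ℝ u y v) x w
      = fderiv ℝ (fderiv ℝ u) x w v := by
    intro v w
    have := (hasFDerivAt_Du hΩ hu hx).clm_apply (hasFDerivAt_const v x)
    rw [this.fderiv]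
    simp
  unfold laplacian2
  rw [Fin.sum_univ_two, h, h]
  simp only [eT, eP, map_add, map_smul, add_apply, smul_apply,
    Complex.real_smul]
  have hcs : (Complex.ofReal (Real.sin θ)) ^ 2 + (Complex.ofReal (Real.cos θ)) ^ 2 = 1 := by
    exact_mod_cast Real.sin_sq_add_cos_sq θ
  generalize fderiv ℝ (fderiv ℝ u) x = H
  push_cast
  push_cast at hcs
  generalize (H (EuclideanSpace.single 0 1)) (EuclideanSpace.single 0 1) = A
  generalize (H (EuclideanSpace.single 1 1)) (EuclideanSpace.single 1 1) = B
  linear_combination (-A - B) * hcs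

variable {a : EuclideanSpace ℝ (Fin 2)} {I : Set ℝ}

lemma hasDerivAt_Ur (hΩ : IsOpen Ω) (hu : ContDiffOn ℝ 2 u Ω) {r θ : ℝ} (hx : a + r • eT θ ∈ Ω) :
    HasDerivAt (fun r : ℝ => u (a + r • eT θ)) (fderiv ℝ u (a + r • eT θ) (eT θ)) r := by
  have h1 : HasDerivAt (fun r : ℝ => a + r • eT θ) (eT θ) r := by
    simpa using ((hasDerivAt_id r).smul_const (eT θ)).const_add a
  exact (hasFDerivAt_u hΩ hu hx).comp_hasDerivAt r h1

lemma hasDerivAt_Urr (hΩ : IsOpen Ω) (hu : ContDiffOn ℝ 2 u Ω) {r θ : ℝ} (hx : a + r • eT θ ∈ Ω) :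
    HasDerivAt (fun r : ℝ => fderiv ℝ u (a + r • eT θ) (eT θ))
      (fderiv ℝ (fderiv ℝ u) (a + r • eT θ) (eT θ) (eT θ)) r := by
  have h1 : HasDerivAt (fun r : ℝ => a + r • eT θ) (eT θ) r := by
    simpa using ((hasDerivAt_id r).smul_const (eT θ)).const_add a
  have h2 : HasDerivAt (fun r : ℝ => fderiv ℝ u (a + r • eT θ))
      (fderiv ℝ (fderiv ℝ u) (a + r • eT θ) (eT θ)) r :=
    (hasFDerivAt_Du hΩ hu hx).comp_hasDerivAt r h1
  have h3 := h2.clm_apply (hasDerivAt_const r (eT θ))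
  refine h3.congr_deriv ?_
  rw [map_zero, add_zero]

lemma hasDerivAt_Ut (hΩ : IsOpen Ω) (hu : ContDiffOn ℝ 2 u Ω) {r θ : ℝ} (hx : a + r • eT θ ∈ Ω) :
    HasDerivAt (fun θ : ℝ => u (a + r • eT θ)) (r * fderiv ℝ u (a + r • eT θ) (eP θ)) θ := by
  have h1 : HasDerivAt (fun θ : ℝ => a + r • eT θ) (r • eP θ) θ :=
    ((hasDerivAt_eT θ).const_smul r).const_add a
  have := (hasFDerivAt_u hΩ hu hx).comp_hasDerivAt θ h1
  refine this.congr_deriv ?_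
  rw [map_smul, Complex.real_smul]

lemma hasDerivAt_Utt (hΩ : IsOpen Ω) (hu : ContDiffOn ℝ 2 u Ω) {r θ : ℝ} (hx : a + r • eT θ ∈ Ω) :
    HasDerivAt (fun θ : ℝ => (r * fderiv ℝ u (a + r • eT θ) (eP θ) : ℂ))
      (r ^ 2 * fderiv ℝ (fderiv ℝ u) (a + r • eT θ) (eP θ) (eP θ)
        - r * fderiv ℝ u (a + r • eT θ) (eT θ)) θ := by
  have h1 : HasDerivAt (fun θ : ℝ => a + r • eT θ) (r • eP θ) θ :=
    ((hasDerivAt_eT θ).const_smul r).const_add a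
  have h2 : HasDerivAt (fun θ : ℝ => fderiv ℝ u (a + r • eT θ))
      (fderiv ℝ (fderiv ℝ u) (a + r • eT θ) (r • eP θ)) θ :=
    (hasFDerivAt_Du hΩ hu hx).comp_hasDerivAt θ h1
  have h3 := (h2.clm_apply (hasDerivAt_eP θ)).const_mul (r : ℂ)
  refine h3.congr_deriv ?_
  rw [map_smul, map_neg, smul_apply, Complex.real_smul]
  ring

/-- Fourier coefficients -/
noncomputable def fc (v : ℝ → ℝ → ℂ) (n : ℤ) (r : ℝ) : ℂ :=
  ∫ θ in (0)..(2 * Real.pi), v r θ * Complex.exp (-(n * Complex.I) * θ)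

lemma fc_ode (hΩ : IsOpen Ω) (hu : ContDiffOn ℝ 2 u Ω) {k : ℂ}
    (hh : ∀ x ∈ Ω, laplacian2 u x + k ^ 2 * u x = 0)
    (hI : IsOpen I) (hIpos : ∀ r ∈ I, 0 < r) (hIΩ : ∀ r ∈ I, ∀ θ, a + r • eT θ ∈ Ω) (n : ℤ) :
    ∃ f1 f2 : ℝ → ℂ, (∀ r ∈ I, HasDerivAt (fc (fun r θ => u (a + r • eT θ)) n) (f1 r) r) ∧
      (∀ r ∈ I, HasDerivAt f1 (f2 r) r) ∧
      ∀ r ∈ I, f2 r = - f1 r / r + (n ^ 2 / r ^ 2 - k ^ 2) * fc (fun r θ => u (a + r • eT θ)) n r := by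
  have hX : Continuous (fun p : ℝ × ℝ => a + p.1 • eT p.2) := by
    have := continuous_eT
    fun_prop
  have hmaps : MapsTo (fun p : ℝ × ℝ => a + p.1 • eT p.2) (I ×ˢ univ) Ω := fun p hp => hIΩ p.1 hp.1 p.2
  have hT : ContinuousOn (fun p : ℝ × ℝ => eT p.2) (I ×ˢ univ) :=
    (continuous_eT.comp continuous_snd).continuousOn
  have hexp : ContinuousOn (fun p : ℝ × ℝ => Complex.exp (-(n * Complex.I) * p.2)) (I ×ˢ univ) := by
    apply Continuous.continuousOn; fun_prop
  have c0 : ContinuousOn (fun p : ℝ × ℝ => u (a + p.1 • eT p.2)) (I ×ˢ univ) :=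
    hu.continuousOn.comp hX.continuousOn hmaps
  have c1 : ContinuousOn (fun p : ℝ × ℝ => fderiv ℝ u (a + p.1 • eT p.2) (eT p.2)) (I ×ˢ univ) :=
    ((contDiffOn_Du hΩ hu).continuousOn.comp hX.continuousOn hmaps).clm_apply hT
  have c2 : ContinuousOn (fun p : ℝ × ℝ => fderiv ℝ (fderiv ℝ u) (a + p.1 • eT p.2) (eT p.2) (eT p.2))
      (I ×ˢ univ) :=
    (((continuousOn_H hΩ hu).comp hX.continuousOn hmaps).clm_apply hT).clm_apply hT
  refine ⟨fc (fun r θ => fderiv ℝ u (a + r • eT θ) (eT θ)) n,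
    fc (fun r θ => fderiv ℝ (fderiv ℝ u) (a + r • eT θ) (eT θ) (eT θ)) n, ?_, ?_, ?_⟩
  · exact hasDerivAt_param (F := fun r θ => u (a + r • eT θ) * Complex.exp (-(n * Complex.I) * θ))
      (F' := fun r θ => fderiv ℝ u (a + r • eT θ) (eT θ) * Complex.exp (-(n * Complex.I) * θ))
      hI (c0.mul hexp) (c1.mul hexp)
      (fun r hr θ => (hasDerivAt_Ur hΩ hu (hIΩ r hr θ)).mul_const _) _ _
  · exact hasDerivAt_param
      (F := fun r θ => fderiv ℝ u (a + r • eT θ) (eT θ) * Complex.exp (-(n * Complex.I) * θ))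
      (F' := fun r θ => fderiv ℝ (fderiv ℝ u) (a + r • eT θ) (eT θ) (eT θ) *
        Complex.exp (-(n * Complex.I) * θ))
      hI (c1.mul hexp) (c2.mul hexp)
      (fun r hr θ => (hasDerivAt_Urr hΩ hu (hIΩ r hr θ)).mul_const _) _ _
  · intro r hr
    have hr0 : (r : ℂ) ≠ 0 := by exact_mod_cast (hIpos r hr).ne'
    have hslice : Continuous (fun θ : ℝ => (r, θ)) := by fun_prop
    have hsm : ∀ θ : ℝ, (r, θ) ∈ I ×ˢ (univ : Set ℝ) := fun θ => ⟨hr, mem_univ _⟩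
    have d0 : Continuous (fun θ : ℝ => u (a + r • eT θ)) :=
      c0.comp_continuous hslice hsm
    have d1 : Continuous (fun θ : ℝ => fderiv ℝ u (a + r • eT θ) (eT θ)) :=
      c1.comp_continuous hslice hsm
    have d2 : Continuous (fun θ : ℝ => fderiv ℝ (fderiv ℝ u) (a + r • eT θ) (eT θ) (eT θ)) :=
      c2.comp_continuous hslice hsm
    have dexp : Continuous (fun θ : ℝ => Complex.exp (-(n * Complex.I) * θ)) := by fun_prop
    -- boundary term
    set W : ℝ → ℂ := fun θ => (r * fderiv ℝ u (a + r • eT θ) (eP θ) + n * Complex.I * u (a + r • eT θ))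
      * Complex.exp (-(n * Complex.I) * θ) with hW
    have hWd : ∀ θ, HasDerivAt W
        ((- (r ^ 2 * fderiv ℝ (fderiv ℝ u) (a + r • eT θ) (eT θ) (eT θ))
          - r * fderiv ℝ u (a + r • eT θ) (eT θ) + (n ^ 2 - k ^ 2 * r ^ 2) * u (a + r • eT θ))
          * Complex.exp (-(n * Complex.I) * θ)) θ := by
      intro θ
      have he : HasDerivAt (fun θ : ℝ => Complex.exp (-(n * Complex.I) * θ))
          (Complex.exp (-(n * Complex.I) * θ) * (-(n * Complex.I))) θ := by
        have := ((Complex.ofRealCLM.hasDerivAt (x := θ)).const_mul (-(n * Complex.I))).cexp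
        simpa using this
      have hx := hIΩ r hr θ
      have := ((hasDerivAt_Utt hΩ hu hx).add ((hasDerivAt_Ut hΩ hu hx).const_mul (n * Complex.I))).mul he
      refine this.congr_deriv ?_
      have hl := hh _ hx
      rw [laplacian_eq hΩ hu hx θ] at hl
      have hI2 := Complex.I_sq
      simp only [Pi.add_apply]
      linear_combination (r ^ 2 * Complex.exp (-(n * Complex.I) * θ)) * hl -
        n ^ 2 * u (a + r • eT θ) * Complex.exp (-(n * Complex.I) * θ) * hI2
    have hIntg := intervalIntegral.integral_eq_sub_of_hasDerivAt (a := 0) (b := 2 * Real.pi)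
      (fun θ _ => hWd θ) (Continuous.intervalIntegrable ((((continuous_const.mul d2).neg.sub (continuous_const.mul d1)).add
        (continuous_const.mul d0)).mul dexp) _ _)
    have hper : W (2 * Real.pi) = W 0 := by
      have e1 : eT (2 * Real.pi) = eT 0 := by simpa using eT_periodic 0
      have e2 : eP (2 * Real.pi) = eP 0 := by simpa using eP_periodic 0
      have e3 : Complex.exp (-(n * Complex.I) * ((2 * Real.pi : ℝ) : ℂ)) = 1 := by
        rw [Complex.exp_eq_one_iff]
        exact ⟨-n, by push_cast; ring⟩
      simp only [hW, e1, e2, e3]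
      simp
    rw [hper, sub_self] at hIntg
    have hsplit : -(r ^ 2 * fc (fun r θ => fderiv ℝ (fderiv ℝ u) (a + r • eT θ) (eT θ) (eT θ)) n r)
        - r * fc (fun r θ => fderiv ℝ u (a + r • eT θ) (eT θ)) n r
        + (n ^ 2 - k ^ 2 * r ^ 2) * fc (fun r θ => u (a + r • eT θ)) n r = 0 := by
      rw [← hIntg]
      simp only [fc]
      rw [← intervalIntegral.integral_const_mul, ← intervalIntegral.integral_const_mul,
        ← intervalIntegral.integral_const_mul, ← intervalIntegral.integral_neg,
        ← intervalIntegral.integral_sub, ← intervalIntegral.integral_add]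
      · congr 1
        ext θ
        ring
      · exact Continuous.intervalIntegrable ((continuous_const.mul (d2.mul dexp)).neg.sub
          (continuous_const.mul (d1.mul dexp))) _ _
      · exact Continuous.intervalIntegrable (continuous_const.mul (d0.mul dexp)) _ _
      · exact Continuous.intervalIntegrable (continuous_const.mul (d2.mul dexp)).neg _ _
      · exact Continuous.intervalIntegrable (continuous_const.mul (d1.mul dexp)) _ _
    field_simp
    linear_combination -hsplit

lemma zero_of_fc {r : ℝ} (hc : Continuous fun θ : ℝ => u (a + r • eT θ))
    (h : ∀ n, fc (fun r θ => u (a + r • eT θ)) n r = 0) (θ : ℝ) : u (a + r • eT θ) = 0 := by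
  have : Fact (0 < 2 * Real.pi) := ⟨Real.two_pi_pos⟩
  have hp : Function.Periodic (fun θ : ℝ => u (a + r • eT θ)) (2 * Real.pi) := by
    intro t; simp only [eT_periodic t]
  let g : C(AddCircle (2 * Real.pi), ℂ) := ⟨hp.lift, continuous_coinduced_dom.2 hc⟩
  have hg : ∀ t : ℝ, g (t : AddCircle (2 * Real.pi)) = u (a + r • eT t) := fun t => rfl
  have hz : fourierCoeff g = 0 := by
    ext n
    rw [fourierCoeff_eq_intervalIntegral g n 0, zero_add]
    have := h n
    simp only [fc] at this
    simp only [hg, fourier_coe_apply, Pi.zero_apply]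
    convert smul_zero _
    rw [← this]
    congr 1
    ext t
    rw [smul_eq_mul, mul_comm]
    congr 2
    push_cast
    field_simp
  have hs : Summable (fourierCoeff g) := by rw [hz]; exact summable_zero
  have h1 := has_pointwise_sum_fourier_series_of_summable hs (θ : AddCircle (2 * Real.pi))
  rw [hz] at h1
  simp only [Pi.zero_apply, zero_smul] at h1
  rw [← hg]
  exact h1.unique hasSum_zero

/-- The annulus lemma. -/
lemma annulus_zero (hΩ : IsOpen Ω) (hu : ContDiffOn ℝ 2 u Ω) {k : ℂ}
    (hh : ∀ x ∈ Ω, laplacian2 u x + k ^ 2 * u x = 0)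
    (hI : IsOpen I) (hIc : I.OrdConnected) (hIpos : ∀ r ∈ I, 0 < r)
    (hIΩ : ∀ r ∈ I, ∀ θ, a + r • eT θ ∈ Ω)
    (h0 : ∀ n, ∃ r0 ∈ I, fc (fun r θ => u (a + r • eT θ)) n =ᶠ[𝓝 r0] 0) :
    ∀ r ∈ I, ∀ θ, u (a + r • eT θ) = 0 := by
  intro r hr θ
  refine zero_of_fc ?_ ?_ θ
  · have := continuous_eT
    exact hu.continuousOn.comp_continuous (by fun_prop) (hIΩ r hr)
  · intro n
    obtain ⟨f1, f2, h1, h2, h3⟩ := fc_ode hΩ hu hh hI hIpos hIΩ n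
    obtain ⟨r0, hr0, hz⟩ := h0 n
    exact bessel_unique n hI hIc hIpos h1 h2 h3 hr0 hz r hr

/-- Unique continuation. -/
lemma unique_cont (hΩ : IsOpen Ω) (hc : IsPreconnected Ω) (hu : ContDiffOn ℝ 2 u Ω) {k : ℂ}
    (hh : ∀ x ∈ Ω, laplacian2 u x + k ^ 2 * u x = 0) {x0} (hx0 : x0 ∈ Ω) (hz : u =ᶠ[𝓝 x0] 0) :
    ∀ x ∈ Ω, u x = 0 := by
  have hsub : Ω ⊆ interior {x | u x = 0} := by
    refine hc.subset_of_closure_inter_subset isOpen_interior ⟨x0, hx0, mem_interior_iff_mem_nhds.2 hz⟩ ?_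
    rintro p ⟨hp, hpΩ⟩
    obtain ⟨ρ, hρ, hb⟩ := Metric.isOpen_iff.1 hΩ p hpΩ
    obtain ⟨b, hbA, hbp⟩ := Metric.mem_closure_iff.1 hp (ρ / 2) (by linarith)
    obtain ⟨ε, hε, hbε⟩ := Metric.mem_nhds_iff.1 (mem_interior_iff_mem_nhds.1 hbA)
    have hkey := annulus_zero (a := b) (I := Ioo 0 (ρ / 2)) hΩ hu hh isOpen_Ioo ordConnected_Ioo
      (fun r hr => hr.1) ?_ ?_
    · rw [mem_interior_iff_mem_nhds, Metric.mem_nhds_iff]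
      refine ⟨ρ / 2 - dist p b, by linarith, fun y hy => ?_⟩
      have hyb : ‖y - b‖ < ρ / 2 := by
        rw [← dist_eq_norm]
        have := dist_triangle y p b
        rw [Metric.mem_ball] at hy
        linarith
      by_cases hyb0 : y = b
      · rw [hyb0]; exact hbε (Metric.mem_ball_self hε)
      obtain ⟨θ, hθ⟩ := exists_eT (y - b)
      have := hkey ‖y - b‖ ⟨norm_pos_iff.2 (sub_ne_zero.2 hyb0), hyb⟩ θ
      rw [← hθ] at this
      simpa using this
    · intro r hr θ
      apply hb
      rw [Metric.mem_ball]
      have h1 : dist (b + r • eT θ) b = r := by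
        rw [dist_eq_norm, add_sub_cancel_left, norm_smul, norm_eT, mul_one, Real.norm_of_nonneg hr.1.le]
      have := dist_triangle (b + r • eT θ) b p
      rw [dist_comm b p] at this
      linarith [hr.2]
    · intro n
      have hm : 0 < min ε (ρ / 2) := lt_min hε (by linarith)
      have m1 := min_le_left ε (ρ / 2)
      have m2 := min_le_right ε (ρ / 2)
      refine ⟨min ε (ρ / 2) / 2, ⟨by linarith, by linarith⟩, ?_⟩
      have : Ioo 0 (min ε (ρ / 2)) ∈ 𝓝 (min ε (ρ / 2) / 2) := Ioo_mem_nhds (by linarith) (by linarith)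
      filter_upwards [this] with r hr
      simp only [fc, Pi.zero_apply]
      have : ∀ θ, u (b + r • eT θ) = 0 := by
        intro θ
        apply hbε
        rw [Metric.mem_ball, dist_eq_norm, add_sub_cancel_left, norm_smul, norm_eT, mul_one,
          Real.norm_of_nonneg hr.1.le]
        linarith [hr.2]
      simp [this]
  intro x hx
  have := interior_subset (hsub hx)
  exact this

end polar

lemma norm_eT_sub_sq (θ φ : ℝ) : ‖eT θ - eT φ‖ ^ 2 = (2 * Real.sin (|θ - φ| / 2)) ^ 2 := by
  have h1 : ‖eT θ - eT φ‖ ^ 2 = (Real.cos θ - Real.cos φ) ^ 2 + (Real.sin θ - Real.sin φ) ^ 2 := by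
    rw [EuclideanSpace.norm_sq_eq]
    simp [eT, Fin.sum_univ_two]
  have h2 : Real.cos (θ - φ) = Real.cos θ * Real.cos φ + Real.sin θ * Real.sin φ := Real.cos_sub _ _
  have h3 : Real.cos (θ - φ) = 1 - 2 * Real.sin (|θ - φ| / 2) ^ 2 := by
    rw [← Real.cos_abs]
    have := Real.cos_two_mul (|θ - φ| / 2)
    rw [mul_div_cancel₀ _ (two_ne_zero)] at this
    rw [this]
    have := Real.sin_sq_add_cos_sq (|θ - φ| / 2)
    linarith
  rw [h1]
  have h4 := Real.sin_sq_add_cos_sq θ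
  have h5 := Real.sin_sq_add_cos_sq φ
  nlinarith

lemma norm_eT_sub_ge {θ φ : ℝ} (h : |θ - φ| ≤ Real.pi) : 2 / Real.pi * |θ - φ| ≤ ‖eT θ - eT φ‖ := by
  have h0 := abs_nonneg (θ - φ)
  have h1 := Real.mul_le_sin (x := |θ - φ| / 2) (by linarith) (by linarith)
  have h2 : 0 ≤ 2 / Real.pi * (|θ - φ| / 2) := by positivity
  have h3 : ‖eT θ - eT φ‖ = 2 * Real.sin (|θ - φ| / 2) := by
    have := norm_eT_sub_sq θ φ
    exact (sq_eq_sq₀ (norm_nonneg _) (by linarith)).1 this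
  rw [h3]
  linarith

lemma norm_eT_sub_le (θ φ : ℝ) : ‖eT θ - eT φ‖ ≤ |θ - φ| := by
  have h0 := abs_nonneg (θ - φ)
  refine (sq_le_sq₀ (norm_nonneg _) h0).1 ?_
  rw [norm_eT_sub_sq, mul_pow]
  have := Real.abs_sin_le_abs (x := |θ - φ| / 2)
  have h2 := sq_le_sq.2 this
  nlinarith

lemma sphere_eq_image {r : ℝ} (hr : 0 < r) :
    Metric.sphere (0 : EuclideanSpace ℝ (Fin 2)) r = (fun θ : ℝ => r • eT θ) '' Icc 0 (2 * Real.pi) := by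
  ext x
  constructor
  · intro hx
    have hx' : ‖x‖ = r := by simpa using hx
    obtain ⟨θ, hθ⟩ := exists_eT x
    obtain ⟨φ, hφ, he⟩ := eT_periodic.exists_mem_Ico₀ Real.two_pi_pos θ
    refine ⟨φ, Ico_subset_Icc_self hφ, ?_⟩
    simp only
    rw [← he, ← hx', ← hθ]
  · rintro ⟨θ, -, rfl⟩
    simp [norm_smul, norm_eT, abs_of_pos hr]

lemma sphere_finite {r : ℝ} (hr : 0 < r) :
    μH[1] (Metric.sphere (0 : EuclideanSpace ℝ (Fin 2)) r) < ⊤ := by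
  rw [sphere_eq_image hr]
  have hl : LipschitzWith r.toNNReal (fun θ : ℝ => r • eT θ) := by
    refine LipschitzWith.of_dist_le_mul fun θ φ => ?_
    rw [Real.coe_toNNReal _ hr.le, dist_eq_norm, ← smul_sub, norm_smul, Real.norm_of_nonneg hr.le,
      Real.dist_eq]
    exact mul_le_mul_of_nonneg_left (norm_eT_sub_le θ φ) hr.le
  refine (hl.hausdorffMeasure_image_le zero_le_one _).trans_lt ?_
  rw [hausdorffMeasure_real]
  simp [ENNReal.mul_lt_top_iff]

lemma half_circle {r : ℝ} (hr : 0 < r) (c : ℝ) :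
    ((volume.restrict (Icc c (c + Real.pi))).map (fun θ : ℝ => r • eT θ)) ≤
      ((Real.pi / (2 * r)).toNNReal : ENNReal) •
        (μH[1].restrict (Metric.sphere (0 : EuclideanSpace ℝ (Fin 2)) r)) := by
  have hcont : Continuous (fun θ : ℝ => r • eT θ) := by
    have := continuous_eT
    fun_prop
  set g := (fun θ : ℝ => r • eT θ) with hg
  have hpi := Real.pi_pos
  refine Measure.le_iff.2 fun S hS => ?_
  rw [Measure.map_apply hcont.measurable hS, Measure.restrict_apply (hcont.measurable hS),
    Measure.smul_apply, Measure.restrict_apply hS, smul_eq_mul]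
  have hbd : ∀ θ ∈ Icc c (c + Real.pi), ∀ φ ∈ Icc c (c + Real.pi),
      dist θ φ ≤ Real.pi / (2 * r) * dist (g θ) (g φ) := by
    intro θ hθ φ hφ
    have : |θ - φ| ≤ Real.pi := by rw [abs_le]; constructor <;> linarith [hθ.1, hθ.2, hφ.1, hφ.2]
    have h1 := norm_eT_sub_ge this
    rw [Real.dist_eq, dist_eq_norm, hg]
    simp only
    rw [← smul_sub, norm_smul, Real.norm_of_nonneg hr.le]
    calc |θ - φ| = Real.pi / (2 * r) * (r * (2 / Real.pi * |θ - φ|)) := by field_simp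
      _ ≤ _ := by gcongr
  have hinj : InjOn g (Icc c (c + Real.pi)) := by
    intro θ hθ φ hφ he
    have := hbd θ hθ φ hφ
    rw [he, dist_self, mul_zero] at this
    exact dist_le_zero.1 this
  set T := g ⁻¹' S ∩ Icc c (c + Real.pi) with hT
  have hinv : ∀ θ ∈ Icc c (c + Real.pi), Function.invFunOn g (Icc c (c + Real.pi)) (g θ) = θ :=
    fun θ hθ => hinj.leftInvOn_invFunOn hθ
  have hlip : LipschitzOnWith (Real.pi / (2 * r)).toNNReal
      (Function.invFunOn g (Icc c (c + Real.pi))) (g '' T) := by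
    refine LipschitzOnWith.of_dist_le_mul ?_
    rintro _ ⟨θ, hθ, rfl⟩ _ ⟨φ, hφ, rfl⟩
    rw [Real.coe_toNNReal _ (by positivity), hinv θ hθ.2, hinv φ hφ.2]
    exact hbd θ hθ.2 φ hφ.2
  have himg : Function.invFunOn g (Icc c (c + Real.pi)) '' (g '' T) = T := by
    rw [image_image]
    have : ∀ θ ∈ T, Function.invFunOn g (Icc c (c + Real.pi)) (g θ) = θ := fun θ hθ => hinv θ hθ.2
    rw [image_congr this, image_id']
  have := hlip.hausdorffMeasure_image_le zero_le_one
  rw [himg, hausdorffMeasure_real, ENNReal.rpow_one] at this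
  refine this.trans ?_
  gcongr
  rintro _ ⟨θ, hθ, rfl⟩
  refine ⟨hθ.1, ?_⟩
  simp [hg, norm_smul, norm_eT, abs_of_pos hr]

lemma half_circle_int {r : ℝ} (hr : 0 < r) (c : ℝ) {w : EuclideanSpace ℝ (Fin 2) → ℝ}
    (hw0 : ∀ x, 0 ≤ w x) (hw : ContinuousOn w (Metric.sphere 0 r)) :
    ∫ θ in c..(c + Real.pi), w (r • eT θ) ≤
      Real.pi / (2 * r) * ∫ x in Metric.sphere (0 : EuclideanSpace ℝ (Fin 2)) r, w x ∂μH[1] := by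
  have hcont : Continuous (fun θ : ℝ => r • eT θ) := by
    have := continuous_eT
    fun_prop
  have hIntg : IntegrableOn w (Metric.sphere (0 : EuclideanSpace ℝ (Fin 2)) r) μH[1] :=
    hw.integrableOn_of_subset_isCompact (isCompact_sphere _ _) Metric.isClosed_sphere.measurableSet
      subset_rfl (sphere_finite hr).ne
  have hIntg2 := hIntg.smul_measure (c := ((Real.pi / (2 * r)).toNNReal : ENNReal)) ENNReal.coe_ne_top
  have hmono := integral_mono_measure (half_circle hr c) (Eventually.of_forall hw0) hIntg2
  rw [integral_smul_measure, integral_map hcont.aemeasurable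
    (hIntg2.mono_measure (half_circle hr c)).aestronglyMeasurable] at hmono
  rw [intervalIntegral.integral_of_le (by linarith [Real.pi_pos]), ← integral_Icc_eq_integral_Ioc]
  refine hmono.trans_eq ?_
  rw [ENNReal.coe_toReal, Real.coe_toNNReal _ (by have := Real.pi_pos; positivity), smul_eq_mul]

lemma circle_int {r : ℝ} (hr : 0 < r) {w : EuclideanSpace ℝ (Fin 2) → ℝ}
    (hw0 : ∀ x, 0 ≤ w x) (hw : ContinuousOn w (Metric.sphere 0 r)) :
    ∫ θ in (0)..(2 * Real.pi), w (r • eT θ) ≤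
      Real.pi / r * ∫ x in Metric.sphere (0 : EuclideanSpace ℝ (Fin 2)) r, w x ∂μH[1] := by
  have hc : Continuous (fun θ : ℝ => w (r • eT θ)) := by
    have := continuous_eT
    refine hw.comp_continuous (by fun_prop) fun θ => ?_
    simp [norm_smul, norm_eT, abs_of_pos hr]
  have h1 := half_circle_int hr 0 hw0 hw
  have h2 := half_circle_int hr Real.pi hw0 hw
  rw [zero_add] at h1
  rw [← two_mul] at h2
  rw [← intervalIntegral.integral_add_adjacent_intervals (b := Real.pi)
    (hc.intervalIntegrable _ _) (hc.intervalIntegrable _ _)]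
  have : Real.pi / r = Real.pi / (2 * r) + Real.pi / (2 * r) := by field_simp; norm_num
  rw [this, add_mul]
  exact add_le_add h1 h2

lemma cs_int {h : ℝ → ℝ} (hc : Continuous h) :
    (∫ θ in (0)..(2 * Real.pi), h θ) ^ 2 ≤ 2 * Real.pi * ∫ θ in (0)..(2 * Real.pi), h θ ^ 2 := by
  have hpi := Real.two_pi_pos
  set m := ∫ θ in (0)..(2 * Real.pi), h θ with hm
  set t := m / (2 * Real.pi) with ht
  have h0 : 0 ≤ ∫ θ in (0)..(2 * Real.pi), (h θ - t) ^ 2 :=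
    intervalIntegral.integral_nonneg hpi.le fun θ _ => sq_nonneg _
  have h1 : ∫ θ in (0)..(2 * Real.pi), (h θ - t) ^ 2 =
      (∫ θ in (0)..(2 * Real.pi), h θ ^ 2) - 2 * t * m + 2 * Real.pi * t ^ 2 := by
    have e : ∀ θ, (h θ - t) ^ 2 = h θ ^ 2 - 2 * t * h θ + t ^ 2 := fun θ => by ring
    simp only [e]
    rw [intervalIntegral.integral_add, intervalIntegral.integral_sub, intervalIntegral.integral_const_mul,
      intervalIntegral.integral_const, smul_eq_mul, sub_zero]
    all_goals
      apply Continuous.intervalIntegrable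
      fun_prop
  rw [h1] at h0
  have h2 : m = 2 * Real.pi * t := by rw [ht]; field_simp
  rw [h2] at h0 ⊢
  nlinarith

lemma fc_bound {u : EuclideanSpace ℝ (Fin 2) → ℂ} {r : ℝ} (hr : 0 < r)
    (hu : ContinuousOn u (Metric.sphere 0 r)) (n : ℤ) :
    r * ‖fc (fun r θ => u (0 + r • eT θ)) n r‖ ^ 2 ≤ 2 * Real.pi ^ 2 *
      ∫ x in Metric.sphere (0 : EuclideanSpace ℝ (Fin 2)) r, ‖u x‖ ^ 2 ∂μH[1] := by
  have hpi := Real.two_pi_pos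
  have hc : Continuous (fun θ : ℝ => u (r • eT θ)) := by
    have := continuous_eT
    refine hu.comp_continuous (by fun_prop) fun θ => ?_
    simp [norm_smul, norm_eT, abs_of_pos hr]
  have h1 : ‖fc (fun r θ => u (0 + r • eT θ)) n r‖ ≤ ∫ θ in (0)..(2 * Real.pi), ‖u (r • eT θ)‖ := by
    refine (intervalIntegral.norm_integral_le_integral_norm hpi.le).trans_eq ?_
    congr 1
    ext θ
    simp [Complex.norm_exp]
  have h2 := cs_int hc.norm
  have h3 := circle_int hr (w := fun x => ‖u x‖ ^ 2) (fun x => sq_nonneg _) (hu.norm.pow 2)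
  simp only at h3
  have h4 := pow_le_pow_left₀ (norm_nonneg _) h1 2
  calc r * ‖fc (fun r θ => u (0 + r • eT θ)) n r‖ ^ 2
      ≤ r * (2 * Real.pi * (Real.pi / r *
        ∫ x in Metric.sphere (0 : EuclideanSpace ℝ (Fin 2)) r, ‖u x‖ ^ 2 ∂μH[1])) := by
        refine mul_le_mul_of_nonneg_left (h4.trans (h2.trans ?_)) hr.le
        exact mul_le_mul_of_nonneg_left h3 hpi.le
    _ = _ := by field_simp

lemma exists_sqrt_im (k : ℂ) (hk : ¬ (k.im = 0 ∧ k.re ≤ 0)) :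
    ∃ l : ℂ, l ≠ 0 ∧ 0 ≤ l.im ∧ l.im = |k.im| ∧ l ^ 2 = k ^ 2 := by
  have hk0 : k ≠ 0 := by rintro rfl; simp at hk
  rcases le_total 0 k.im with h | h
  · exact ⟨k, hk0, h, (abs_of_nonneg h).symm, rfl⟩
  · exact ⟨-k, neg_ne_zero.2 hk0, by simpa using h, by simp [abs_of_nonpos h], by ring⟩

/-- Generalized Rellich's Lemma I in two dimensions. -/
theorem generalized_rellich_I_2d
    (D : Set (EuclideanSpace ℝ (Fin 2))) (hD_open : IsOpen D)
    (hD_bounded : Bornology.IsBounded D)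
    (hD_conn : IsConnected ((closure D)ᶜ))
    (k : ℂ) (hk : ¬ (k.im = 0 ∧ k.re ≤ 0))
    (u : EuclideanSpace ℝ (Fin 2) → ℂ)
    (hu_smooth : ContDiffOn ℝ 2 u ((closure D)ᶜ))
    (hu_helmholtz : ∀ x ∈ (closure D)ᶜ, laplacian2 u x + k ^ 2 * u x = 0)
    (hdecay :
      Filter.Tendsto
        (fun r : ℝ =>
          Real.exp (2 * |k.im| * r) *
            ∫ x in Metric.sphere (0 : EuclideanSpace ℝ (Fin 2)) r, ‖u x‖ ^ 2 ∂μH[1])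
        Filter.atTop (nhds 0)) :
    ∀ x ∈ (closure D)ᶜ, u x = 0 := by
  have hΩ : IsOpen ((closure D)ᶜ) := isClosed_closure.isOpen_compl
  obtain ⟨l, hl0, hlim, hlk, hl2⟩ := exists_sqrt_im k hk
  rw [← hl2] at hu_helmholtz
  obtain ⟨R0, hR0⟩ := hD_bounded.closure.subset_closedBall 0
  set R := max R0 1 with hR
  have hRpos : 0 < R := lt_max_of_lt_right one_pos
  have hout : ∀ x : EuclideanSpace ℝ (Fin 2), R < ‖x‖ → x ∈ (closure D)ᶜ := by
    intro x hx hxD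
    have := hR0 hxD
    rw [mem_closedBall_zero_iff] at this
    exact absurd (this.trans (le_max_left _ _)) (not_le.2 hx)
  have hnorm : ∀ r : ℝ, 0 < r → ∀ θ, ‖(0 : EuclideanSpace ℝ (Fin 2)) + r • eT θ‖ = r := by
    intro r hr θ
    rw [zero_add, norm_smul, norm_eT, mul_one, Real.norm_of_nonneg hr.le]
  have hIpos : ∀ r ∈ Set.Ioi R, 0 < r := fun r hr => hRpos.trans hr
  have hIΩ : ∀ r ∈ Set.Ioi R, ∀ θ, (0 : EuclideanSpace ℝ (Fin 2)) + r • eT θ ∈ (closure D)ᶜ := by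
    intro r hr θ
    apply hout
    rw [hnorm r (hIpos r hr)]
    exact hr
  have hann := annulus_zero (a := 0) (I := Set.Ioi R) hΩ hu_smooth hu_helmholtz isOpen_Ioi
    ordConnected_Ioi hIpos hIΩ ?_
  · have hx0 : R < ‖(0 : EuclideanSpace ℝ (Fin 2)) + (R + 1) • eT 0‖ := by
      rw [hnorm _ (by linarith)]; linarith
    refine unique_cont hΩ hD_conn.isPreconnected hu_smooth hu_helmholtz (hout _ hx0) ?_
    have hopen : IsOpen {x : EuclideanSpace ℝ (Fin 2) | R < ‖x‖} :=
      isOpen_lt continuous_const continuous_norm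
    filter_upwards [hopen.mem_nhds hx0] with y hy
    obtain ⟨θ, hθ⟩ := exists_eT y
    have := hann ‖y‖ hy θ
    rw [← hθ, zero_add] at this
    exact this
  · intro n
    obtain ⟨f1, f2, h1, h2, h3⟩ := fc_ode (a := 0) hΩ hu_smooth hu_helmholtz isOpen_Ioi hIpos hIΩ n
    have hR1 : ∀ r, R + 1 ≤ r → r ∈ Set.Ioi R := fun r hr => by
      rw [Set.mem_Ioi]; linarith
    have hL : Filter.Tendsto (fun r : ℝ => r * Real.exp (2 * l.im * r) *
        ‖fc (fun r θ => u (0 + r • eT θ)) n r‖ ^ 2) Filter.atTop (nhds 0) := by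
      have hd := hdecay.const_mul (2 * Real.pi ^ 2)
      rw [mul_zero] at hd
      refine squeeze_zero' ?_ ?_ hd
      · filter_upwards [eventually_gt_atTop 0] with r hr
        positivity
      · filter_upwards [eventually_gt_atTop R] with r hr
        have hrp := hIpos r hr
        have hcont : ContinuousOn u (Metric.sphere 0 r) := by
          refine hu_smooth.continuousOn.mono fun x hx => hout x ?_
          rw [mem_sphere_zero_iff_norm] at hx
          rw [hx]; exact hr
        have hb := fc_bound hrp hcont n
        rw [hlk]
        have := mul_le_mul_of_nonneg_left hb (Real.exp_nonneg (2 * |k.im| * r))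
        linarith
    obtain ⟨r1, hr1, hz⟩ := bessel_decay (f := fc (fun r θ => u (0 + r • eT θ)) n) (r0 := R + 1) hl0 hlim n (by linarith)
      (fun r hr => h1 r (hR1 r hr)) (fun r hr => h2 r (hR1 r hr)) (fun r hr => h3 r (hR1 r hr)) hL
    refine ⟨r1 + 1, hR1 _ (by linarith), ?_⟩
    filter_upwards [Ioi_mem_nhds (show r1 < r1 + 1 by linarith)] with r hr
    exact hz r (le_of_lt hr)
end

section
/- Let k ∈ ℂ with Im k > 0, let c ∈ ℝ, and let α, β ∈ ℂ. If lim_{r→∞} ( |α|² + 2 e^{2(Im k) r} Re(α · conj(β) · e^{2i((Re k) r − c)}) + e^{4(Im k) r} |β|² ) = 0, where the limit is taken as r → ∞ over real r, then α = 0 and β = 0. -/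
/-- The case `Im k > 0` of the limit identity (eq. (2.14)). -/
theorem rellich_limit_identity_im_pos
    (k : ℂ) (hk : 0 < k.im) (c : ℝ) (α β : ℂ)
    (h : Filter.Tendsto
      (fun r : ℝ =>
        ‖α‖ ^ 2 +
          2 * Real.exp (2 * k.im * r) *
            (α * (starRingEnd ℂ) β *
              Complex.exp (2 * Complex.I * ((k.re : ℂ) * (r : ℂ) - (c : ℂ)))).re +
          Real.exp (4 * k.im * r) * ‖β‖ ^ 2)
      Filter.atTop (nhds 0)) :
    α = 0 ∧ β = 0 := by
  have hβ : β = 0 := by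
    by_contra hβ
    have hb : 0 < ‖β‖ := norm_pos_iff.mpr hβ
    have h1 : Filter.Tendsto (fun r : ℝ => Real.exp (2 * k.im * r) * ‖β‖ - ‖α‖)
        Filter.atTop Filter.atTop := by
      have h2 : Filter.Tendsto (fun r : ℝ => 2 * k.im * r) Filter.atTop Filter.atTop :=
        Filter.tendsto_id.const_mul_atTop (by positivity)
      have h3 := (Real.tendsto_exp_atTop.comp h2).atTop_mul_const hb
      simpa [sub_eq_add_neg] using Filter.tendsto_atTop_add_const_right _ (-‖α‖) h3
    have h4 := h1.atTop_mul_atTop₀ h1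
    refine not_tendsto_nhds_of_tendsto_atTop (Filter.tendsto_atTop_mono ?_ h4) 0 h
    intro r
    set w : ℂ := α * (starRingEnd ℂ) β *
      Complex.exp (2 * Complex.I * ((k.re : ℂ) * (r : ℂ) - (c : ℂ))) with hw
    have hn : ‖w‖ = ‖α‖ * ‖β‖ := by
      have e : (2 * Complex.I * ((k.re : ℂ) * (r : ℂ) - (c : ℂ)))
          = ((2 * (k.re * r - c) : ℝ) : ℂ) * Complex.I := by
        push_cast; ring
      rw [hw, e, norm_mul, norm_mul, Complex.norm_exp_ofReal_mul_I, RCLike.norm_conj, mul_one]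
    have h5 : -(‖α‖ * ‖β‖) ≤ w.re := by
      rw [← hn]
      exact (abs_le.mp (Complex.abs_re_le_norm w)).1
    have h6 : Real.exp (4 * k.im * r) = Real.exp (2 * k.im * r) * Real.exp (2 * k.im * r) := by
      rw [← Real.exp_add]; congr 1; ring
    rw [h6]
    have h7 := mul_le_mul_of_nonneg_left h5 (Real.exp_pos (2 * k.im * r)).le
    nlinarith [h7]
  refine ⟨?_, hβ⟩
  subst hβ
  simp at h
  exact h
end

section
/- Let B be the open ball of radius ρ > 0 centered at the origin in ℝ², and let u : ℝ² → ℂ be twice continuously differentiable on the closed ball B̄ with u(x) = 0 for every x on the boundary sphere {x : |x| = ρ}. If k ∈ ℂ with Im k ≠ 0 and Δu + k²u = 0 on B, then u = 0 on B̄. (Non-real k is not a Dirichlet eigenvalue of −Δ on the ball.) -/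
open MeasureTheory Filter Topology Set

lemma step_exists : ∃ (S : ℕ → ℝ → ℝ) (C : ℝ), 0 ≤ C ∧ (∀ n, ContDiff ℝ 1 (S n)) ∧
    (∀ (n : ℕ) t, t ≤ 1 / ((n : ℝ) + 1) → S n t = 0) ∧ (∀ n t, |S n t| ≤ 1) ∧
    (∀ n t, 0 ≤ t → |t * deriv (S n) t| ≤ C) ∧
    (∀ t, 0 < t → ∀ᶠ n in atTop, S n t = 1 ∧ deriv (S n) t = 0) := by
  have hsm : ContDiff ℝ 1 Real.smoothTransition := Real.smoothTransition.contDiff (n := 1)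
  have hcd : Continuous (deriv Real.smoothTransition) := hsm.continuous_deriv le_rfl
  have hd1 : ∀ x, 1 < x → deriv Real.smoothTransition x = 0 := by
    intro x hx
    have : Real.smoothTransition =ᶠ[𝓝 x] fun _ => (1 : ℝ) := by
      filter_upwards [Ioi_mem_nhds hx] with y hy
      exact Real.smoothTransition.one_of_one_le (le_of_lt hy)
    rw [this.deriv_eq]; simp
  have hd0 : ∀ x, x < 0 → deriv Real.smoothTransition x = 0 := by
    intro x hx
    have : Real.smoothTransition =ᶠ[𝓝 x] fun _ => (0 : ℝ) := by
      filter_upwards [Iio_mem_nhds hx] with y hy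
      exact Real.smoothTransition.zero_of_nonpos (le_of_lt hy)
    rw [this.deriv_eq]; simp
  obtain ⟨M, hM⟩ := (isCompact_Icc (a := (0:ℝ)) (b := 1)).exists_bound_of_continuousOn
    hcd.continuousOn
  have hM0 : 0 ≤ M := (norm_nonneg _).trans (hM 0 (by simp))
  have hder : ∀ (n : ℕ) t, deriv (fun t : ℝ => Real.smoothTransition (((n:ℝ)+1) * t - 1)) t
      = ((n:ℝ)+1) * deriv Real.smoothTransition (((n:ℝ)+1) * t - 1) := by
    intro n t
    have h1 : HasDerivAt (fun t : ℝ => ((n:ℝ)+1) * t - 1) ((n:ℝ)+1) t := by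
      simpa using ((hasDerivAt_id t).const_mul ((n:ℝ)+1)).sub_const 1
    have h2 := ((hsm.differentiable one_ne_zero) (((n:ℝ)+1) * t - 1)).hasDerivAt
    have := (h2.comp t h1).deriv
    rw [mul_comm]; exact this
  refine ⟨fun n t => Real.smoothTransition (((n:ℝ)+1) * t - 1), 2 * M, by positivity, ?_, ?_, ?_,
    ?_, ?_⟩
  · intro n; exact hsm.comp (by fun_prop)
  · intro n t ht
    apply Real.smoothTransition.zero_of_nonpos
    have hn : (0:ℝ) < n + 1 := by positivity
    rw [le_div_iff₀ hn] at ht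
    linarith
  · intro n t
    rw [abs_of_nonneg (Real.smoothTransition.nonneg _)]
    exact Real.smoothTransition.le_one _
  · intro n t ht
    rw [hder]
    have hn : (0:ℝ) < n + 1 := by positivity
    set s := ((n:ℝ)+1) * t - 1 with hs
    have e : t * (((n:ℝ)+1) * deriv Real.smoothTransition s)
      = (s + 1) * deriv Real.smoothTransition s := by rw [hs]; ring
    rw [e]
    by_cases h0 : s < 0
    · rw [hd0 s h0]; simp; exact hM0
    by_cases h1 : 1 < s
    · rw [hd1 s h1]; simp; exact hM0
    push Not at h0 h1
    rw [abs_mul, abs_of_nonneg (by linarith : 0 ≤ s + 1)]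
    have := hM s ⟨h0, h1⟩
    rw [Real.norm_eq_abs] at this
    gcongr
    linarith
  · intro t ht
    obtain ⟨N, hN⟩ := exists_nat_gt (2 / t)
    filter_upwards [eventually_ge_atTop N] with n hn
    have h : 1 < ((n:ℝ)+1) * t - 1 := by
      rw [div_lt_iff₀ ht] at hN
      have : (N:ℝ) ≤ n := by exact_mod_cast hn
      nlinarith
    refine ⟨Real.smoothTransition.one_of_one_le h.le, ?_⟩
    rw [hder, hd1 _ h, mul_zero]


/-- The compactly supported field component. -/
noncomputable def fluxF (ρ : ℝ) (u : (EuclideanSpace ℝ (Fin 2)) → ℂ) (G : ℝ → ℝ) (e : (EuclideanSpace ℝ (Fin 2))) : (EuclideanSpace ℝ (Fin 2)) → ℂ :=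
  (Metric.ball (0 : (EuclideanSpace ℝ (Fin 2))) ρ).indicator
    (fun x => ((G (‖u x‖ ^ 2) : ℝ) : ℂ) * ((starRingEnd ℂ) (u x) * fderiv ℝ u x e))

lemma flux_props (ρ : ℝ) (u : (EuclideanSpace ℝ (Fin 2)) → ℂ)
    (hu : ContDiffOn ℝ 2 u (Metric.closedBall (0 : (EuclideanSpace ℝ (Fin 2))) ρ))
    (hb : ∀ x ∈ Metric.sphere (0 : (EuclideanSpace ℝ (Fin 2))) ρ, u x = 0)
    (G : ℝ → ℝ) (hG : ContDiff ℝ 1 G) (δ : ℝ) (hδ : 0 < δ) (hG0 : ∀ t, t ≤ δ → G t = 0)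
    (e : (EuclideanSpace ℝ (Fin 2))) :
    Continuous (fun x => fderiv ℝ (fluxF ρ u G e) x e) ∧
    Integrable (fun x => fderiv ℝ (fluxF ρ u G e) x e) ∧
    ∫ x, fderiv ℝ (fluxF ρ u G e) x e = 0 ∧
    (∀ x ∉ Metric.ball (0 : (EuclideanSpace ℝ (Fin 2))) ρ, fderiv ℝ (fluxF ρ u G e) x e = 0) ∧
    (∀ x ∈ Metric.ball (0 : (EuclideanSpace ℝ (Fin 2))) ρ, fderiv ℝ (fluxF ρ u G e) x e =
      ((G (‖u x‖ ^ 2) : ℝ) : ℂ) * (((‖fderiv ℝ u x e‖ ^ 2 : ℝ) : ℂ) +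
        (starRingEnd ℂ) (u x) * fderiv ℝ (fun y => fderiv ℝ u y e) x e)
      + ((deriv G (‖u x‖ ^ 2) * (2 * inner ℝ (u x) (fderiv ℝ u x e)) : ℝ) : ℂ)
        * ((starRingEnd ℂ) (u x) * fderiv ℝ u x e)) := by
  set B := Metric.ball (0 : (EuclideanSpace ℝ (Fin 2))) ρ with hB
  set K := Metric.closedBall (0 : (EuclideanSpace ℝ (Fin 2))) ρ ∩ (fun x => ‖u x‖ ^ 2) ⁻¹' (Ici δ) with hK
  have hKc : IsClosed K :=
    (hu.continuousOn.norm.pow 2).preimage_isClosed_of_isClosed Metric.isClosed_closedBall isClosed_Ici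
  have hKcomp : IsCompact K :=
    (isCompact_closedBall (0 : (EuclideanSpace ℝ (Fin 2))) ρ).of_isClosed_subset hKc inter_subset_left
  have hKB : K ⊆ B := by
    rintro x ⟨hx, hx2⟩
    by_contra hxB
    have : x ∈ Metric.sphere (0 : (EuclideanSpace ℝ (Fin 2))) ρ := by
      simp only [hB, Metric.mem_ball, Metric.mem_closedBall, Metric.mem_sphere, not_lt] at *
      exact le_antisymm hx hxB
    simp only [mem_preimage, mem_Ici, hb x this] at hx2
    simp at hx2
    linarith
  have hsupp : tsupport (fluxF ρ u G e) ⊆ K := by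
    apply closure_minimal _ hKc
    intro x hx
    by_contra hxK
    apply hx
    by_cases hxB : x ∈ B
    · have : G (‖u x‖ ^ 2) = 0 := by
        apply hG0
        by_contra hlt
        exact hxK ⟨Metric.ball_subset_closedBall hxB, (not_le.1 hlt).le⟩
      rw [fluxF, indicator_of_mem hxB, this]; simp
    · rw [fluxF, indicator_of_notMem hxB]
  have hcs : HasCompactSupport (fluxF ρ u G e) :=
    hKcomp.of_isClosed_subset (isClosed_tsupport _) hsupp
  have huat : ∀ x ∈ B, ContDiffAt ℝ 2 u x := fun x hx =>
    hu.contDiffAt (mem_of_superset (Metric.isOpen_ball.mem_nhds hx) Metric.ball_subset_closedBall)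
  have hψ : ∀ x ∈ B, ContDiffAt ℝ 1 (fun y => fderiv ℝ u y e) x := fun x hx =>
    ((huat x hx).fderiv_right (m := 1) (by norm_num)).clm_apply contDiffAt_const
  have hev : ∀ x ∈ B, fluxF ρ u G e =ᶠ[𝓝 x]
      (fun x => ((G (‖u x‖ ^ 2) : ℝ) : ℂ) * ((starRingEnd ℂ) (u x) * fderiv ℝ u x e)) := by
    intro x hx
    filter_upwards [Metric.isOpen_ball.mem_nhds hx] with y hy
    rw [fluxF, indicator_of_mem hy]
  have hcd : ContDiff ℝ 1 (fluxF ρ u G e) := by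
    rw [contDiff_iff_contDiffAt]
    intro x
    by_cases hx : x ∈ tsupport (fluxF ρ u G e)
    swap
    · exact (contDiffAt_const (c := (0 : ℂ))).congr_of_eventuallyEq
        (notMem_tsupport_iff_eventuallyEq.1 hx)
    have hxB := hKB (hsupp hx)
    refine ContDiffAt.congr_of_eventuallyEq ?_ (hev x hxB)
    have h1 : ContDiffAt ℝ 1 u x := (huat x hxB).of_le (by norm_num)
    refine ContDiffAt.mul ?_ (ContDiffAt.mul ?_ (hψ x hxB))
    · exact Complex.ofRealCLM.contDiff.contDiffAt.comp x
        (hG.contDiffAt.comp x (h1.norm_sq ℝ))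
    · exact Complex.conjCLE.toContinuousLinearMap.contDiff.contDiffAt.comp x h1
  have hcont : Continuous (fun x => fderiv ℝ (fluxF ρ u G e) x e) :=
    (hcd.continuous_fderiv one_ne_zero).clm_apply continuous_const
  have hint : Integrable (fun x => fderiv ℝ (fluxF ρ u G e) x e) :=
    hcont.integrable_of_hasCompactSupport (hcs.fderiv_apply ℝ e)
  refine ⟨hcont, hint, ?_, ?_, ?_⟩
  · have := integral_mul_fderiv_eq_neg_fderiv_mul_of_integrable (𝕜 := ℂ) (μ := (volume : Measure (EuclideanSpace ℝ (Fin 2))))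
      (f := fun _ => (1:ℂ)) (g := fluxF ρ u G e) (v := e) (by simp) (by simpa using hint)
      (by simpa using hcd.continuous.integrable_of_hasCompactSupport hcs) (by simp)
      (fun x _ => hcd.differentiable one_ne_zero x)
    simpa using this
  · intro x hx
    rw [fderiv_of_notMem_tsupport ℝ (fun h => hx (hKB (hsupp h)))]; simp
  · intro x hx
    rw [(hev x hx).fderiv_eq]
    have h1 : HasFDerivAt u (fderiv ℝ u x) x := ((huat x hx).differentiableAt (by norm_num)).hasFDerivAt
    have h2 := ((hψ x hx).differentiableAt one_ne_zero).hasFDerivAt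
    have h3 := Complex.conjCLE.toContinuousLinearMap.hasFDerivAt.comp x h1
    have h4 := Complex.ofRealCLM.hasFDerivAt.comp x
      (((hG.differentiable one_ne_zero) (‖u x‖^2)).hasDerivAt.hasFDerivAt.comp x h1.norm_sq)
    have h5 := (h4.mul (h3.mul h2)).fderiv
    have h6 := congrArg (fun L => L e) h5
    refine Eq.trans h6 ?_
    have hc : ((‖fderiv ℝ u x e‖ ^ 2 : ℝ) : ℂ) =
      fderiv ℝ u x e * (starRingEnd ℂ) (fderiv ℝ u x e) := by
      rw [Complex.mul_conj, Complex.normSq_eq_norm_sq]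
    rw [hc]
    simp
    ring

/-- A non-real `k` is not a Dirichlet eigenvalue of `−Δ` on a ball. -/
theorem nonreal_not_dirichlet_eigenvalue_ball
    (ρ : ℝ) (hρ : 0 < ρ)
    (u : EuclideanSpace ℝ (Fin 2) → ℂ)
    (hu_smooth : ContDiffOn ℝ 2 u (Metric.closedBall (0 : EuclideanSpace ℝ (Fin 2)) ρ))
    (hu_bdry : ∀ x ∈ Metric.sphere (0 : EuclideanSpace ℝ (Fin 2)) ρ, u x = 0)
    (k : ℂ) (hk : k.im ≠ 0)
    (hu_helmholtz : ∀ x ∈ Metric.ball (0 : EuclideanSpace ℝ (Fin 2)) ρ,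
      laplacian2 u x + k ^ 2 * u x = 0) :
    ∀ x ∈ Metric.closedBall (0 : EuclideanSpace ℝ (Fin 2)) ρ, u x = 0 := by
  obtain ⟨S, C, hC, hS1, hS0, hSb, hSd, hSl⟩ := step_exists
  set B := Metric.ball (0 : (EuclideanSpace ℝ (Fin 2))) ρ with hB
  set e : Fin 2 → (EuclideanSpace ℝ (Fin 2)) := fun i => EuclideanSpace.single i (1 : ℝ) with he
  have hen : ∀ i, ‖e i‖ = 1 := by intro i; simp [he]
  obtain ⟨M₂, hM₂⟩ := (isCompact_closedBall (0 : (EuclideanSpace ℝ (Fin 2))) ρ).exists_bound_of_continuousOn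
    hu_smooth.continuousOn
  obtain ⟨M, hM⟩ := (isCompact_closedBall (0 : (EuclideanSpace ℝ (Fin 2))) ρ).exists_bound_of_continuousOn
    (hu_smooth.continuousOn_fderivWithin
      (uniqueDiffOn_convex (convex_closedBall (0 : (EuclideanSpace ℝ (Fin 2))) ρ)
        (by rw [interior_closedBall _ hρ.ne']; exact Metric.nonempty_ball.2 hρ)) (by norm_num))
  have hd : ∀ x ∈ B, ∀ i, ‖fderiv ℝ u x (e i)‖ ≤ M := by
    intro x hx i
    have h := hM x (Metric.ball_subset_closedBall hx)
    rw [fderivWithin_of_mem_nhds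
      (mem_of_superset (Metric.isOpen_ball.mem_nhds hx) Metric.ball_subset_closedBall)] at h
    have := (fderiv ℝ u x).le_opNorm (e i)
    rw [hen, mul_one] at this
    exact this.trans h
  have hu2 : ∀ x ∈ B, ‖u x‖ ≤ M₂ := fun x hx => hM₂ x (Metric.ball_subset_closedBall hx)
  have hP := fun n i => flux_props ρ u hu_smooth hu_bdry (S n) (hS1 n) (1 / ((n:ℝ)+1))
    (by positivity) (hS0 n) (e i)
  set D : ℕ → (EuclideanSpace ℝ (Fin 2)) → ℂ := fun n x => ∑ i, fderiv ℝ (fluxF ρ u (S n) (e i)) x (e i) with hD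
  set A : (EuclideanSpace ℝ (Fin 2)) → ℝ := fun x => ∑ i, ‖fderiv ℝ u x (e i)‖ ^ 2 with hA
  have hDout : ∀ n, ∀ x ∉ B, D n x = 0 := fun n x hx =>
    Finset.sum_eq_zero fun i _ => (hP n i).2.2.2.1 x hx
  have hDin : ∀ n, ∀ x ∈ B, D n x =
      ((S n (‖u x‖ ^ 2) : ℝ) : ℂ) * ((A x : ℂ) - k ^ 2 * ((‖u x‖ ^ 2 : ℝ) : ℂ))
      + ∑ i, ((deriv (S n) (‖u x‖ ^ 2) * (2 * inner ℝ (u x) (fderiv ℝ u x (e i))) : ℝ) : ℂ)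
        * ((starRingEnd ℂ) (u x) * fderiv ℝ u x (e i)) := by
    intro n x hx
    have h0 : ∑ i, fderiv ℝ (fun y => fderiv ℝ u y (e i)) x (e i) = - (k ^ 2 * u x) :=
      eq_neg_of_add_eq_zero_left (hu_helmholtz x hx)
    have hc : ((‖u x‖ ^ 2 : ℝ) : ℂ) = u x * (starRingEnd ℂ) (u x) := by
      rw [Complex.mul_conj, Complex.normSq_eq_norm_sq]
    simp only [hD]
    rw [Finset.sum_congr rfl (fun i _ => (hP n i).2.2.2.2 x hx), Finset.sum_add_distrib,
      ← Finset.mul_sum, Finset.sum_add_distrib, ← Finset.mul_sum, h0]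
    congr 2
    rw [hc, hA]
    push_cast
    ring
  have hDcont : ∀ n, Continuous (D n) := fun n =>
    continuous_finsetSum _ fun i _ => (hP n i).1
  have hDint : ∀ n, ∫ x, D n x = 0 := by
    intro n
    rw [integral_finsetSum _ (fun i _ => (hP n i).2.1)]
    exact Finset.sum_eq_zero fun i _ => (hP n i).2.2.1
  set c : ℝ := 2 * M ^ 2 + ‖k ^ 2‖ * M₂ ^ 2 + 2 * (2 * C * M ^ 2) with hc
  have hc0 : 0 ≤ c := by positivity
  have hDb : ∀ n x, ‖D n x‖ ≤ B.indicator (fun _ => c) x := by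
    intro n x
    by_cases hx : x ∈ B
    swap
    · rw [hDout n x hx, indicator_of_notMem hx]; simp
    rw [hDin n x hx, indicator_of_mem hx]
    have hAx : |A x| ≤ 2 * M ^ 2 := by
      rw [abs_of_nonneg (Finset.sum_nonneg fun i _ => by positivity)]
      simp only [hA, Fin.sum_univ_two]
      have h1 := pow_le_pow_left₀ (norm_nonneg _) (hd x hx 0) 2
      have h2 := pow_le_pow_left₀ (norm_nonneg _) (hd x hx 1) 2
      linarith
    have hux := pow_le_pow_left₀ (norm_nonneg _) (hu2 x hx) 2
    have t1 : ‖((S n (‖u x‖ ^ 2) : ℝ) : ℂ) * ((A x : ℂ) - k ^ 2 * ((‖u x‖ ^ 2 : ℝ) : ℂ))‖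
        ≤ 2 * M ^ 2 + ‖k ^ 2‖ * M₂ ^ 2 := by
      rw [norm_mul, Complex.norm_real, Real.norm_eq_abs]
      have h1 : ‖(A x : ℂ) - k ^ 2 * ((‖u x‖ ^ 2 : ℝ) : ℂ)‖ ≤ 2 * M ^ 2 + ‖k ^ 2‖ * M₂ ^ 2 := by
        refine (norm_sub_le _ _).trans ?_
        rw [norm_mul, Complex.norm_real, Complex.norm_real, Real.norm_eq_abs, Real.norm_eq_abs,
          abs_of_nonneg (sq_nonneg ‖u x‖)]
        gcongr
      calc _ ≤ 1 * (2 * M ^ 2 + ‖k ^ 2‖ * M₂ ^ 2) :=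
            mul_le_mul (hSb n _) h1 (norm_nonneg _) zero_le_one
        _ = _ := one_mul _
    have t2 : ∀ i, ‖((deriv (S n) (‖u x‖ ^ 2) *
          (2 * inner ℝ (u x) (fderiv ℝ u x (e i))) : ℝ) : ℂ)
        * ((starRingEnd ℂ) (u x) * fderiv ℝ u x (e i))‖ ≤ 2 * C * M ^ 2 := by
      intro i
      rw [norm_mul, norm_mul, Complex.norm_real, Real.norm_eq_abs, abs_mul, abs_mul, RCLike.norm_conj,
        abs_two]
      have h1 := abs_real_inner_le_norm (u x) (fderiv ℝ u x (e i))
      have h2 := hSd n (‖u x‖ ^ 2) (by positivity)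
      rw [abs_mul, abs_of_nonneg (sq_nonneg ‖u x‖)] at h2
      have h3 := pow_le_pow_left₀ (norm_nonneg _) (hd x hx i) 2
      calc _ ≤ |deriv (S n) (‖u x‖ ^ 2)| * (2 * (‖u x‖ * ‖fderiv ℝ u x (e i)‖)) *
            (‖u x‖ * ‖fderiv ℝ u x (e i)‖) := by gcongr
        _ = 2 * (‖u x‖ ^ 2 * |deriv (S n) (‖u x‖ ^ 2)|) * ‖fderiv ℝ u x (e i)‖ ^ 2 := by ring
        _ ≤ 2 * C * M ^ 2 := by gcongr
    refine (norm_add_le _ _).trans (add_le_add t1 ((norm_sum_le _ _).trans ?_))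
    refine (Finset.sum_le_sum fun i _ => t2 i).trans ?_
    simp
  have hbi : Integrable (B.indicator (fun _ => c)) (volume : Measure (EuclideanSpace ℝ (Fin 2))) := by
    rw [integrable_indicator_iff Metric.isOpen_ball.measurableSet]
    exact integrableOn_const (Metric.isBounded_ball.measure_lt_top.ne)
  set H : (EuclideanSpace ℝ (Fin 2)) → ℂ := fun x => by
    classical exact if x ∈ B ∧ u x ≠ 0 then (A x : ℂ) - k ^ 2 * ((‖u x‖ ^ 2 : ℝ) : ℂ) else 0 with hH
  have hlim : ∀ x, Tendsto (fun n => D n x) atTop (𝓝 (H x)) := by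
    intro x
    by_cases hx : x ∈ B
    swap
    · have : H x = 0 := by simp [hH, hx]
      rw [this]
      exact tendsto_const_nhds.congr fun n => (hDout n x hx).symm
    by_cases hux : u x = 0
    · have : H x = 0 := by simp [hH, hux]
      rw [this]
      refine tendsto_const_nhds.congr fun n => ?_
      rw [hDin n x hx, hux, hS0 n _ (by simp; positivity)]
      simp
    · have : H x = (A x : ℂ) - k ^ 2 * ((‖u x‖ ^ 2 : ℝ) : ℂ) := by simp [hH, hx, hux]
      rw [this]
      refine tendsto_const_nhds.congr' ?_
      filter_upwards [hSl (‖u x‖ ^ 2) (by positivity)] with n hn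
      rw [hDin n x hx, hn.1, hn.2]
      simp
  have hHint : ∫ x, H x = 0 := by
    have := tendsto_integral_of_dominated_convergence (B.indicator (fun _ => c))
      (fun n => (hDcont n).aestronglyMeasurable) hbi (fun n => ae_of_all _ (hDb n))
      (ae_of_all _ hlim)
    simp only [hDint] at this
    exact (tendsto_nhds_unique this tendsto_const_nhds)
  have hHi : Integrable H := by
    refine hbi.mono' (aestronglyMeasurable_of_tendsto_ae atTop
      (fun n => (hDcont n).aestronglyMeasurable) (ae_of_all _ hlim)) (ae_of_all _ fun x => ?_)
    exact le_of_tendsto (hlim x).norm (Eventually.of_forall fun n => hDb n x)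
  -- the L² mass
  set W : (EuclideanSpace ℝ (Fin 2)) → ℝ := B.indicator (fun x => ‖u x‖ ^ 2) with hW
  have hWi : Integrable W := by
    rw [hW, integrable_indicator_iff Metric.isOpen_ball.measurableSet]
    exact ((hu_smooth.continuousOn.norm.pow 2).integrableOn_compact
      (isCompact_closedBall _ _)).mono_set Metric.ball_subset_closedBall
  have hW0 : ∀ x, 0 ≤ W x := fun x => indicator_nonneg (fun x _ => by positivity) x
  have hre : ∫ x, (H x).re = 0 := by
    have := integral_re hHi
    rw [hHint] at this; simpa using this
  have him : ∫ x, (H x).im = 0 := by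
    have := integral_im hHi
    rw [hHint] at this; simpa using this
  have hWint : ∫ x, W x = 0 := by
    by_cases hkr : k.re = 0
    · have hle : ∀ x, k.im ^ 2 * W x ≤ (H x).re := by
        intro x
        by_cases hx : x ∈ B
        swap
        · simp [hW, hH, hx]
        by_cases hux : u x = 0
        · simp [hW, hH, hux, hx]
        have hA0 : 0 ≤ A x := Finset.sum_nonneg fun i _ => by positivity
        have hHx : H x = (A x : ℂ) - k ^ 2 * ((‖u x‖ ^ 2 : ℝ) : ℂ) := by simp [hH, hx, hux]
        have hWx : W x = ‖u x‖ ^ 2 := by rw [hW, indicator_of_mem hx]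
        rw [hHx, hWx, Complex.sub_re, Complex.re_mul_ofReal, Complex.ofReal_re, pow_two k,
          Complex.mul_re, hkr]
        nlinarith
      have h1 := integral_mono (hWi.const_mul (k.im ^ 2)) hHi.re hle
      have h1' : ∫ x, k.im ^ 2 * W x ≤ ∫ x, (H x).re := h1
      rw [hre, integral_const_mul] at h1'
      have h2 : 0 ≤ ∫ x, W x := integral_nonneg hW0
      have h3 : 0 < k.im ^ 2 := by positivity
      nlinarith
    · have heq : ∀ x, (H x).im = -(2 * k.re * k.im) * W x := by
        intro x
        by_cases hx : x ∈ B
        swap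
        · simp [hW, hH, hx]
        by_cases hux : u x = 0
        · simp [hW, hH, hux, hx]
        have hHx : H x = (A x : ℂ) - k ^ 2 * ((‖u x‖ ^ 2 : ℝ) : ℂ) := by simp [hH, hx, hux]
        have hWx : W x = ‖u x‖ ^ 2 := by rw [hW, indicator_of_mem hx]
        rw [hHx, hWx, Complex.sub_im, Complex.im_mul_ofReal, Complex.ofReal_im, pow_two k,
          Complex.mul_im]
        ring
      simp only [heq] at him
      rw [integral_const_mul] at him
      rcases mul_eq_zero.1 him with h | h
      · exfalso
        have : 2 * k.re * k.im ≠ 0 := by positivity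
        exact this (neg_eq_zero.1 h)
      · exact h
  have hWae : W =ᵐ[volume] 0 := (integral_eq_zero_iff_of_nonneg hW0 hWi).1 hWint
  have huB : EqOn u (fun _ => 0) B := by
    refine Measure.eqOn_open_of_ae_eq (μ := (volume : Measure (EuclideanSpace ℝ (Fin 2)))) ?_ Metric.isOpen_ball
      (hu_smooth.continuousOn.mono Metric.ball_subset_closedBall) continuousOn_const
    rw [EventuallyEq, ae_restrict_iff' Metric.isOpen_ball.measurableSet]
    filter_upwards [hWae] with x hx hxB
    rw [hW, indicator_of_mem hxB] at hx
    simpa using hx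
  intro x hx
  by_cases hxB : x ∈ B
  · exact huB hxB
  · apply hu_bdry
    simp only [hB, Metric.mem_ball, Metric.mem_closedBall, Metric.mem_sphere, not_lt] at *
    exact le_antisymm hx hxB
end
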